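/- For every set S of n points in the plane in general position and any two trees T, T' ∈ 𝒯(S), the tree T can be transformed into T' by a sequence of fewer than 8n simultaneous empty-triangle rotations. -/

import Mathlib

open scoped Classical

noncomputable section

/-- Points in the plane. -/
abbrev Pt : Type := ℝ × ℝ

/-- The closed straight-line segment spanned by an (unordered) edge. -/
def segOf (e : Sym2 Pt) : Set Pt :=
  Sym2.lift ⟨fun p q => segment ℝ p q, fun p q => segment_symm ℝ p q⟩ e

/-- The set of endpoints of an edge. -/
def epts (e : Sym2 Pt) : Set Pt := {p | p ∈ e}

/-- Two edges intersect in at most common endpoints (they do not cross). -/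
def NoCrossPair (e f : Sym2 Pt) : Prop := segOf e ∩ segOf f ⊆ epts e ∩ epts f

/-- A set of edges is noncrossing: any two distinct edges meet in at most a common endpoint. -/
def NoCross (E : Finset (Sym2 Pt)) : Prop := ∀ e ∈ E, ∀ f ∈ E, e ≠ f → NoCrossPair e f

/-- `E` is the edge set of a noncrossing straight-line spanning tree on the point set `S`:
all edges are nondegenerate with endpoints in `S`, pairwise noncrossing, there are
`|S| - 1` of them, and they connect all of `S`. -/
def IsPST (S : Finset Pt) (E : Finset (Sym2 Pt)) : Prop :=
  (∀ e ∈ E, ¬ e.IsDiag ∧ ∀ p ∈ e, p ∈ S) ∧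
  NoCross E ∧ E.card + 1 = S.card ∧
  ∀ p ∈ S, ∀ q ∈ S, Relation.ReflTransGen (fun a b => s(a, b) ∈ E) p q

/-- `S` is in general position: no three of its points are collinear. -/
def GenPos (S : Finset Pt) : Prop :=
  ∀ p ∈ S, ∀ q ∈ S, ∀ r ∈ S, p ≠ q → p ≠ r → q ≠ r → ¬ Collinear ℝ ({p, q, r} : Set Pt)

/-- `S` is in convex position: every point of `S` is a vertex of the convex hull of `S`. -/
def ConvexPos (S : Finset Pt) : Prop :=
  ∀ p ∈ S, p ∉ convexHull ℝ ((S : Set Pt) \ {p})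

/-- The open interior of the triangle with vertices `p`, `q`, `r`. -/
def triInt (p q r : Pt) : Set Pt := interior (convexHull ℝ ({p, q, r} : Set Pt))

/-- `y` can be reached from `x` by a sequence of at most `m` `step`-operations. -/
def ReachesIn {α : Type*} (step : α → α → Prop) (m : ℕ) (x y : α) : Prop :=
  ∃ k ≤ m, ∃ f : ℕ → α, f 0 = x ∧ f k = y ∧ ∀ i < k, step (f i) (f (i + 1))

/-- A simultaneous rotation from `E₁` to `E₂`: a bijection `π` between the removed and the
inserted edges such that each `e` shares an endpoint with `π e` and `π e` crosses no edge
of `E₁`. -/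
def SimRotation (S : Finset Pt) (E₁ E₂ : Finset (Sym2 Pt)) : Prop :=
  IsPST S E₁ ∧ IsPST S E₂ ∧ ∃ π : Sym2 Pt → Sym2 Pt,
    Set.BijOn π ↑(E₁ \ E₂) ↑(E₂ \ E₁) ∧
    ∀ e ∈ E₁ \ E₂, (∃ p, p ∈ e ∧ p ∈ π e) ∧ ∀ f ∈ E₁, NoCrossPair (π e) f

/-- An empty-triangle rotation replaces an edge `pq` by an adjacent edge `pr` such that
no edge of either tree meets the interior of the triangle `pqr`. -/
def EmptyTriRot (S : Finset Pt) (E₁ E₂ : Finset (Sym2 Pt)) : Prop :=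
  IsPST S E₁ ∧ IsPST S E₂ ∧ ∃ p q r : Pt,
    E₁ \ E₂ = {s(p, q)} ∧ E₂ \ E₁ = {s(p, r)} ∧
    ∀ g ∈ E₁ ∪ E₂, Disjoint (segOf g) (triInt p q r)

/-- A simultaneous empty-triangle rotation. -/
def SimEmptyTriRot (S : Finset Pt) (E₁ E₂ : Finset (Sym2 Pt)) : Prop :=
  IsPST S E₁ ∧ IsPST S E₂ ∧ ∃ π : Sym2 Pt → Sym2 Pt,
    Set.BijOn π ↑(E₁ \ E₂) ↑(E₂ \ E₁) ∧
    ∀ e ∈ E₁ \ E₂, ∃ p q r : Pt, e = s(p, q) ∧ π e = s(p, r) ∧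
      ∀ g ∈ E₁ ∪ E₂, Disjoint (segOf g) (triInt p q r)

/-- An edge slide replaces `pq` by `pr`, where `qr` is an edge of both trees and no edge of
either tree meets the interior of the triangle `pqr`. -/
def EdgeSlide (S : Finset Pt) (E₁ E₂ : Finset (Sym2 Pt)) : Prop :=
  IsPST S E₁ ∧ IsPST S E₂ ∧ ∃ p q r : Pt,
    E₁ \ E₂ = {s(p, q)} ∧ E₂ \ E₁ = {s(p, r)} ∧
    s(q, r) ∈ E₁ ∧ s(q, r) ∈ E₂ ∧
    ∀ g ∈ E₁ ∪ E₂, Disjoint (segOf g) (triInt p q r)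

/-- A simultaneous edge slide. -/
def SimEdgeSlide (S : Finset Pt) (E₁ E₂ : Finset (Sym2 Pt)) : Prop :=
  IsPST S E₁ ∧ IsPST S E₂ ∧ ∃ π : Sym2 Pt → Sym2 Pt,
    Set.BijOn π ↑(E₁ \ E₂) ↑(E₂ \ E₁) ∧
    ∀ e ∈ E₁ \ E₂, ∃ p q r : Pt, e = s(p, q) ∧ π e = s(p, r) ∧
      s(q, r) ∈ E₁ ∧ s(q, r) ∈ E₂ ∧
      ∀ g ∈ E₁ ∪ E₂, Disjoint (segOf g) (triInt p q r)

/-- `e` is an edge of the convex hull of `S`: it joins two distinct points of `S` and its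
segment lies on the boundary of the convex hull of `S`. -/
def IsHullEdge (S : Finset Pt) (e : Sym2 Pt) : Prop :=
  ∃ u v : Pt, e = s(u, v) ∧ u ∈ S ∧ v ∈ S ∧ u ≠ v ∧
    segment ℝ u v ⊆ frontier (convexHull ℝ (S : Set Pt))

/-- The spanning star centered at `v`. -/
def starAt (S : Finset Pt) (v : Pt) : Finset (Sym2 Pt) := (S.erase v).image (fun w => s(v, w))

/-- An edge-labeled tree: an edge set together with a labeling function. -/
abbrev LTree := Finset (Sym2 Pt) × (Sym2 Pt → ℕ)

/-- `T` is an edge-labeled noncrossing straight-line spanning tree on `S`: its edge set is in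
`𝒯(S)` and its labeling is a bijection from the edges onto `{1, …, |S| - 1}`
(normalized to `0` on non-edges). -/
def IsLabeledPST (S : Finset Pt) (T : LTree) : Prop :=
  IsPST S T.1 ∧ Set.BijOn T.2 ↑T.1 (Set.Icc 1 (S.card - 1)) ∧ ∀ e, e ∉ T.1 → T.2 e = 0

/-- A simultaneous exchange on edge-labeled trees: an arbitrary bijection between removed and
inserted edges transferring labels, all common edges keeping their labels. -/
def LabSimExchange (S : Finset Pt) (T₁ T₂ : LTree) : Prop :=
  IsLabeledPST S T₁ ∧ IsLabeledPST S T₂ ∧ ∃ π : Sym2 Pt → Sym2 Pt,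
    Set.BijOn π ↑(T₁.1 \ T₂.1) ↑(T₂.1 \ T₁.1) ∧
    (∀ e ∈ T₁.1 \ T₂.1, T₂.2 (π e) = T₁.2 e) ∧
    ∀ e ∈ T₁.1 ∩ T₂.1, T₂.2 e = T₁.2 e

/-- A rotation on edge-labeled trees: the removed and inserted edges share an endpoint and do
not cross, the label of the removed edge is transferred, and all other labels are kept. -/
def LabRotation (S : Finset Pt) (T₁ T₂ : LTree) : Prop :=
  IsLabeledPST S T₁ ∧ IsLabeledPST S T₂ ∧ ∃ e₁ e₂ : Sym2 Pt,
    T₁.1 \ T₂.1 = {e₁} ∧ T₂.1 \ T₁.1 = {e₂} ∧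
    (∃ p, p ∈ e₁ ∧ p ∈ e₂) ∧ NoCrossPair e₁ e₂ ∧
    T₂.2 e₂ = T₁.2 e₁ ∧ ∀ e ∈ T₁.1 ∩ T₂.1, T₂.2 e = T₁.2 e

/-- An edge slide on edge-labeled trees, transferring the label of the slid edge. -/
def LabEdgeSlide (S : Finset Pt) (T₁ T₂ : LTree) : Prop :=
  IsLabeledPST S T₁ ∧ IsLabeledPST S T₂ ∧ ∃ p q r : Pt,
    T₁.1 \ T₂.1 = {s(p, q)} ∧ T₂.1 \ T₁.1 = {s(p, r)} ∧
    s(q, r) ∈ T₁.1 ∧ s(q, r) ∈ T₂.1 ∧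
    (∀ g ∈ T₁.1 ∪ T₂.1, Disjoint (segOf g) (triInt p q r)) ∧
    T₂.2 (s(p, r)) = T₁.2 (s(p, q)) ∧ ∀ e ∈ T₁.1 ∩ T₂.1, T₂.2 e = T₁.2 e

/-- orientation determinant -/
def DD (p q r : Pt) : ℝ := (q.1 - p.1) * (r.2 - p.2) - (q.2 - p.2) * (r.1 - p.1)

/-- affine combination -/
def cmb (t : ℝ) (a b : Pt) : Pt := ((1 - t) * a.1 + t * b.1, (1 - t) * a.2 + t * b.2)

lemma DD_cmb (p q : Pt) (t : ℝ) (a b : Pt) :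
    DD p q (cmb t a b) = (1 - t) * DD p q a + t * DD p q b := by
  simp only [DD, cmb]; ring

lemma DD_rot (p q r : Pt) : DD p q r = DD q r p := by simp only [DD]; ring

lemma DD_swap (p q r : Pt) : DD p q r = - DD q p r := by simp only [DD]; ring

lemma DD_self1 (p q : Pt) : DD p q p = 0 := by simp only [DD]; ring

lemma DD_self2 (p q : Pt) : DD p q q = 0 := by simp only [DD]; ring

lemma DD_self0 (p q : Pt) : DD p p q = 0 := by simp only [DD]; ring

lemma mem_segOf {a b w : Pt} :
    w ∈ segOf s(a, b) ↔ ∃ t : ℝ, 0 ≤ t ∧ t ≤ 1 ∧ w = cmb t a b := by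
  show w ∈ segment ℝ a b ↔ _
  rw [segment_eq_image]
  constructor
  · rintro ⟨t, ⟨h0, h1⟩, rfl⟩
    refine ⟨t, h0, h1, ?_⟩
    ext <;> simp [cmb]
  · rintro ⟨t, h0, h1, rfl⟩
    refine ⟨t, ⟨h0, h1⟩, ?_⟩
    ext <;> simp [cmb]

lemma cmb_zero (a b : Pt) : cmb 0 a b = a := by ext <;> simp [cmb]
lemma cmb_one (a b : Pt) : cmb 1 a b = b := by ext <;> simp [cmb]
lemma cmb_symm (t : ℝ) (a b : Pt) : cmb t a b = cmb (1 - t) b a := by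
  ext <;> simp only [cmb] <;> ring

lemma mem_segOf_of_mem {k : Sym2 Pt} {a : Pt} (h : a ∈ k) : a ∈ segOf k := by
  obtain ⟨b, rfl⟩ := h
  exact mem_segOf.2 ⟨0, le_rfl, zero_le_one, (cmb_zero a b).symm⟩

lemma cmb_mem_segOf {k : Sym2 Pt} {w v : Pt} (hw : w ∈ segOf k) (hv : v ∈ segOf k) {t : ℝ}
    (h0 : 0 ≤ t) (h1 : t ≤ 1) : cmb t w v ∈ segOf k := by
  induction k using Sym2.ind with
  | _ a b =>
    obtain ⟨s, hs0, hs1, rfl⟩ := mem_segOf.1 hw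
    obtain ⟨u, hu0, hu1, rfl⟩ := mem_segOf.1 hv
    refine mem_segOf.2 ⟨(1 - t) * s + t * u, by nlinarith, ?_, ?_⟩
    · nlinarith [mul_nonneg (sub_nonneg.2 h1) (sub_nonneg.2 hs1), mul_nonneg h0 (sub_nonneg.2 hu1)]
    · ext <;> simp only [cmb] <;> ring

/-- no three collinear, determinant form -/
def GPD (S : Finset Pt) : Prop :=
  ∀ p ∈ S, ∀ q ∈ S, ∀ r ∈ S, p ≠ q → DD p q r = 0 → r = p ∨ r = q

lemma GenPos.gpd {S : Finset Pt} (h : GenPos S) : GPD S := by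
  intro p hp q hq r hr hpq hD
  by_contra hcon
  push Not at hcon
  refine h p hp q hq r hr hpq (Ne.symm hcon.1) (Ne.symm hcon.2) ?_
  rw [collinear_iff_of_mem (p₀ := p) (by simp)]
  refine ⟨q - p, ?_⟩
  intro w hw
  simp only [Set.mem_insert_iff, Set.mem_singleton_iff] at hw
  rcases hw with rfl | rfl | rfl
  · exact ⟨0, by simp⟩
  · exact ⟨1, by simp⟩
  · have hd : q.1 - p.1 ≠ 0 ∨ q.2 - p.2 ≠ 0 := by
      by_contra h'
      push Not at h'
      exact hpq (Prod.ext (by linarith [h'.1]) (by linarith [h'.2]))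
    simp only [DD] at hD
    rcases hd with hd | hd
    · refine ⟨(w.1 - p.1) / (q.1 - p.1), ?_⟩
      ext
      · simp; field_simp; ring
      · simp; field_simp; linarith
    · refine ⟨(w.2 - p.2) / (q.2 - p.2), ?_⟩
      ext
      · simp; field_simp; linarith
      · simp; field_simp; ring

/-- maximal noncrossing edge set -/
def MaxG (S : Finset Pt) (G : Finset (Sym2 Pt)) : Prop :=
  (∀ e ∈ G, ¬ e.IsDiag ∧ ∀ p ∈ e, p ∈ S) ∧ NoCross G ∧
  ∀ p ∈ S, ∀ q ∈ S, p ≠ q → (∀ k ∈ G, k ≠ s(p, q) → NoCrossPair s(p, q) k) → s(p, q) ∈ G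

lemma NoCrossPair.symm {e f : Sym2 Pt} (h : NoCrossPair e f) : NoCrossPair f e := by
  intro w hw
  have := h ⟨hw.2, hw.1⟩
  exact ⟨this.2, this.1⟩

lemma exists_MaxG {S : Finset Pt} {T : Finset (Sym2 Pt)}
    (h1 : ∀ e ∈ T, ¬ e.IsDiag ∧ ∀ p ∈ e, p ∈ S) (h2 : NoCross T) :
    ∃ G, T ⊆ G ∧ MaxG S G := by
  let U : Finset (Finset (Sym2 Pt)) :=
    ((S.sym2).powerset).filter (fun G => T ⊆ G ∧
      (∀ e ∈ G, ¬ e.IsDiag ∧ ∀ p ∈ e, p ∈ S) ∧ NoCross G)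
  have hU : U.Nonempty := by
    refine ⟨T, ?_⟩
    simp only [U, Finset.mem_filter, Finset.mem_powerset]
    refine ⟨?_, subset_rfl, h1, h2⟩
    intro e he
    rw [Finset.mem_sym2_iff]
    exact (h1 e he).2
  obtain ⟨G, hG, hmax⟩ := U.exists_max_image Finset.card hU
  simp only [U, Finset.mem_filter, Finset.mem_powerset] at hG hmax
  obtain ⟨hGs, hTG, hG1, hG2⟩ := hG
  refine ⟨G, hTG, hG1, hG2, ?_⟩
  intro p hp q hq hpq hk
  by_contra hn
  have hmem : ∀ e ∈ insert s(p, q) G, ¬ e.IsDiag ∧ ∀ r ∈ e, r ∈ S := by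
    intro e he
    rcases Finset.mem_insert.1 he with rfl | he
    · refine ⟨by simpa using hpq, ?_⟩
      intro r hr
      rcases Sym2.mem_iff.1 hr with rfl | rfl <;> assumption
    · exact hG1 e he
  have := hmax (insert s(p, q) G) ⟨?_, ?_, hmem, ?_⟩
  · rw [Finset.card_insert_of_notMem hn] at this; omega
  · intro e he
    rw [Finset.mem_sym2_iff]
    exact (hmem e he).2
  · exact hTG.trans (Finset.subset_insert _ _)
  · intro e he f hf hef
    rcases Finset.mem_insert.1 he with rfl | he'
    · rcases Finset.mem_insert.1 hf with rfl | hf'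
      · exact absurd rfl hef
      · exact hk f hf' (Ne.symm hef)
    · rcases Finset.mem_insert.1 hf with rfl | hf'
      · exact (hk e he' hef).symm
      · exact hG2 e he' f hf' hef

/-- adding criterion -/
lemma MaxG.add {S : Finset Pt} {G : Finset (Sym2 Pt)} (hS : GPD S) (hG : MaxG S G)
    {p q : Pt} (hp : p ∈ S) (hq : q ∈ S) (hpq : p ≠ q)
    (h : ∀ k ∈ G, k ≠ s(p, q) → ∀ w ∈ segOf k, ∀ t : ℝ, 0 < t → t < 1 → w = cmb t p q →
      ∀ a ∈ k, ∀ b ∈ k, DD p q a < 0 → 0 < DD p q b → False) : s(p, q) ∈ G := by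
  refine hG.2.2 p hp q hq hpq ?_
  intro k hk hne w hw
  by_contra hcon
  induction k using Sym2.ind with
  | _ a b =>
    have haS : a ∈ S := (hG.1 _ hk).2 a (by simp)
    have hbS : b ∈ S := (hG.1 _ hk).2 b (by simp)
    have hab : a ≠ b := by simpa using (hG.1 _ hk).1
    have hcom : ∀ v ∈ S, v = w → DD p q v = 0 → DD a b v = 0 → False := by
      rintro v hv rfl h1 h2
      apply hcon
      constructor
      · have := hS p hp q hq v hv hpq h1
        simpa [epts] using this
      · have := hS a haS b hbS v hv hab h2
        simpa [epts] using this
    obtain ⟨t, ht0, ht1, hwt⟩ := mem_segOf.1 hw.1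
    obtain ⟨u, hu0, hu1, hwu⟩ := mem_segOf.1 hw.2
    have hD1 : DD p q w = 0 := by rw [hwt, DD_cmb, DD_self1, DD_self2]; ring
    have hD2 : DD a b w = 0 := by rw [hwu, DD_cmb, DD_self1, DD_self2]; ring
    have key : ∀ v ∈ S, v ≠ w := by
      intro v hv hvw
      exact hcom v hv hvw (by rw [hvw]; exact hD1) (by rw [hvw]; exact hD2)
    have ht0' : 0 < t := lt_of_le_of_ne ht0 (by
      rintro rfl; exact key p hp (by rw [hwt, cmb_zero]))
    have ht1' : t < 1 := lt_of_le_of_ne ht1 (by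
      rintro rfl; exact key q hq (by rw [hwt, cmb_one]))
    have hu0' : 0 < u := lt_of_le_of_ne hu0 (by
      rintro rfl; exact key a haS (by rw [hwu, cmb_zero]))
    have hu1' : u < 1 := lt_of_le_of_ne hu1 (by
      rintro rfl; exact key b hbS (by rw [hwu, cmb_one]))
    have hsum : (1 - u) * DD p q a + u * DD p q b = 0 := by rw [← DD_cmb, ← hwu, hD1]
    have hane : DD p q a ≠ 0 := by
      intro h0
      have hb0 : DD p q b = 0 := by
        rw [h0] at hsum
        have : u * DD p q b = 0 := by linarith
        rcases mul_eq_zero.1 this with h | h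
        · linarith
        · exact h
      apply hne
      rcases hS p hp q hq a haS hpq h0 with rfl | rfl <;>
        rcases hS _ hp _ hq b hbS hpq hb0 with rfl | rfl
      · exact absurd rfl hab
      · rfl
      · exact Sym2.eq_swap
      · exact absurd rfl hab
    rcases lt_or_gt_of_ne hane with h1 | h1
    · refine h _ hk hne w hw.2 t ht0' ht1' hwt a (by simp) b (by simp) h1 ?_
      by_contra h2
      push Not at h2
      nlinarith [mul_neg_of_pos_of_neg (sub_pos.2 hu1') h1]
    · refine h _ hk hne w hw.2 t ht0' ht1' hwt b (by simp) a (by simp) ?_ h1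
      by_contra h2
      push Not at h2
      nlinarith [mul_pos (sub_pos.2 hu1') h1]

lemma exit_lemma {E0 F0 E1 F1 : ℝ} (hE : 0 < E0) (hF : 0 < F0) (h : ¬ (0 < E1 ∧ 0 < F1)) :
    ∃ t : ℝ, 0 < t ∧ t ≤ 1 ∧
      (((1 - t) * E0 + t * E1 = 0 ∧ 0 ≤ (1 - t) * F0 + t * F1) ∨
       ((1 - t) * F0 + t * F1 = 0 ∧ 0 ≤ (1 - t) * E0 + t * E1)) := by
  have aux : ∀ {E0 F0 E1 F1 : ℝ}, 0 < E0 → 0 < F0 → E1 ≤ 0 → F0 * E1 ≤ E0 * F1 →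
      ∃ t : ℝ, 0 < t ∧ t ≤ 1 ∧ ((1 - t) * E0 + t * E1 = 0 ∧ 0 ≤ (1 - t) * F0 + t * F1) := by
    intro E0 F0 E1 F1 hE hF hE1 hx
    have hd : 0 < E0 - E1 := by linarith
    refine ⟨E0 / (E0 - E1), by positivity, ?_, ?_, ?_⟩
    · rw [div_le_one hd]; linarith
    · field_simp; ring
    · have : (1 - E0 / (E0 - E1)) * F0 + E0 / (E0 - E1) * F1
          = (E0 * F1 - F0 * E1) / (E0 - E1) := by field_simp; ring
      rw [this]
      exact div_nonneg (by linarith) hd.le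
  rcases le_total (F0 * E1) (E0 * F1) with hc | hc
  · have hE1 : E1 ≤ 0 := by
      by_contra h1
      push Not at h1
      have h2 : F1 ≤ 0 := by
        by_contra h3; push Not at h3; exact h ⟨h1, h3⟩
      nlinarith [mul_pos hF h1]
    obtain ⟨t, a, b, c⟩ := aux hE hF hE1 hc
    exact ⟨t, a, b, Or.inl c⟩
  · have hF1 : F1 ≤ 0 := by
      by_contra h1
      push Not at h1
      have h2 : E1 ≤ 0 := by
        by_contra h3; push Not at h3; exact h ⟨h3, h1⟩
      nlinarith [mul_pos hE h1]
    obtain ⟨t, a, b, c⟩ := aux hF hE hF1 hc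
    exact ⟨t, a, b, Or.inr c⟩

lemma small_lemma {E0 F0 : ℝ} (E1 F1 : ℝ) (hE : 0 < E0) (hF : 0 < F0) :
    ∃ t : ℝ, 0 < t ∧ t ≤ 1 ∧ 0 < (1 - t) * E0 + t * E1 ∧ 0 < (1 - t) * F0 + t * F1 := by
  by_cases h : 0 < E1 ∧ 0 < F1
  · exact ⟨1, one_pos, le_rfl, by linarith [h.1], by linarith [h.2]⟩
  · obtain ⟨t, h0, h1, h2⟩ := exit_lemma hE hF h
    refine ⟨t / 2, by linarith, by linarith, ?_, ?_⟩
    · rcases h2 with h2 | h2 <;> nlinarith [h2.1, h2.2]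
    · rcases h2 with h2 | h2 <;> nlinarith [h2.1, h2.2]

lemma cmb_inj_t {x z : Pt} (h : x ≠ z) {t s : ℝ} (hts : cmb t x z = cmb s x z) : t = s := by
  have h1 := congrArg Prod.fst hts
  have h2 := congrArg Prod.snd hts
  simp only [cmb] at h1 h2
  by_contra hne
  have hne' : t - s ≠ 0 := sub_ne_zero.2 hne
  apply h
  ext
  · have : (t - s) * (x.1 - z.1) = 0 := by linarith
    rcases mul_eq_zero.1 this with h | h
    · exact absurd h hne'
    · linarith
  · have : (t - s) * (x.2 - z.2) = 0 := by linarith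
    rcases mul_eq_zero.1 this with h | h
    · exact absurd h hne'
    · linarith

/-- an edge with two points on the line through two points of `S` is that edge -/
lemma eq_of_two_pts {S : Finset Pt} (hS : GPD S) {x z : Pt} (hx : x ∈ S) (hz : z ∈ S)
    (hxz : x ≠ z) {k : Sym2 Pt} (hk : ¬ k.IsDiag ∧ ∀ p ∈ k, p ∈ S) {v w : Pt}
    (hv : v ∈ segOf k) (hw : w ∈ segOf k) (hvw : v ≠ w) (h1 : DD x z v = 0) (h2 : DD x z w = 0) :
    k = s(x, z) := by
  induction k using Sym2.ind with
  | _ a b =>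
    have haS : a ∈ S := hk.2 a (by simp)
    have hbS : b ∈ S := hk.2 b (by simp)
    have hab : a ≠ b := by simpa using hk.1
    obtain ⟨t, -, -, rfl⟩ := mem_segOf.1 hv
    obtain ⟨u, -, -, rfl⟩ := mem_segOf.1 hw
    have htu : t - u ≠ 0 := by
      intro h
      apply hvw
      rw [sub_eq_zero.1 h]
    rw [DD_cmb] at h1 h2
    have e1 : (t - u) * (DD x z b - DD x z a) = 0 := by linarith
    have e2 : DD x z b - DD x z a = 0 := (mul_eq_zero.1 e1).resolve_left htu
    have ha : DD x z a = 0 := by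
      have : DD x z b = DD x z a := by linarith
      rw [this] at h1; linarith
    have hb : DD x z b = 0 := by linarith
    rcases hS x hx z hz a haS hxz ha with rfl | rfl <;>
      rcases hS _ hx _ hz b hbS hxz hb with rfl | rfl
    · exact absurd rfl hab
    · rfl
    · exact Sym2.eq_swap
    · exact absurd rfl hab

set_option maxHeartbeats 2000000 in
lemma lemN {S : Finset Pt} {G : Finset (Sym2 Pt)} (hS : GPD S) (hG : MaxG S G)
    {x y z0 : Pt} (hx : x ∈ S) (hz0 : z0 ∈ S) (hf : 0 < DD x y z0) :
    ∃ p ∈ S, 0 < DD x y p ∧ s(x, p) ∈ G := by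
  by_cases hzG : s(x, z0) ∈ G
  · exact ⟨z0, hz0, hf, hzG⟩
  have hxz : x ≠ z0 := by
    rintro rfl; rw [DD_self1] at hf; exact lt_irrefl _ hf
  let K := G.filter (fun k => ∃ t : ℝ, 0 < t ∧ t < 1 ∧ cmb t x z0 ∈ segOf k)
  have hK : K.Nonempty := by
    by_contra hne
    apply hzG
    refine hG.add hS hx hz0 hxz ?_
    intro k hk _ w hw t h0 h1 hwt _ _ _ _ _ _
    apply hne
    exact ⟨k, Finset.mem_filter.2 ⟨hk, t, h0, h1, hwt ▸ hw⟩⟩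
  have hKt : ∀ k : Sym2 Pt, ∃ t : ℝ, k ∈ K → 0 < t ∧ t < 1 ∧ cmb t x z0 ∈ segOf k := by
    intro k
    by_cases hk : k ∈ K
    · obtain ⟨t, ht⟩ := (Finset.mem_filter.1 hk).2
      exact ⟨t, fun _ => ht⟩
    · exact ⟨0, fun h => absurd h hk⟩
  choose τ hτ using hKt
  obtain ⟨k, hkK, hmin⟩ := K.exists_min_image τ hK
  obtain ⟨ht0, ht1, hwk⟩ := hτ k hkK
  have hkG : k ∈ G := (Finset.mem_filter.1 hkK).1
  set t := τ k with ht_def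
  set w := cmb t x z0 with hw_def
  have hline : ∀ u : ℝ, DD x z0 (cmb u x z0) = 0 := by
    intro u; rw [DD_cmb, DD_self1, DD_self2]; ring
  have hfree : ∀ k' ∈ G, ∀ t' : ℝ, 0 < t' → t' < t → cmb t' x z0 ∉ segOf k' := by
    intro k' hk' t' h0 h1 hmem
    have hk'K : k' ∈ K := Finset.mem_filter.2 ⟨hk', t', h0, by linarith, hmem⟩
    have hle := hmin k' hk'K
    obtain ⟨_, _, h3⟩ := hτ k' hk'K
    have : k' = s(x, z0) := by
      refine eq_of_two_pts hS hx hz0 hxz (hG.1 k' hk') hmem h3 ?_ (hline _) (hline _)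
      intro h
      have := cmb_inj_t hxz h
      linarith
    exact hzG (this ▸ hk')
  -- choose the endpoint `a`
  have hfw : 0 < DD x y w := by
    rw [hw_def, DD_cmb, DD_self1]; nlinarith
  have hkSD := hG.1 k hkG
  obtain ⟨a, hak, hfa⟩ : ∃ a ∈ k, 0 < DD x y a := by
    clear_value w t
    induction k using Sym2.ind with
    | _ a b =>
      obtain ⟨u, hu0, hu1, hwu⟩ := mem_segOf.1 hwk
      by_cases h1 : 0 < DD x y a
      · exact ⟨a, by simp, h1⟩
      · refine ⟨b, by simp, ?_⟩
        rw [hwu, DD_cmb] at hfw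
        by_contra h2
        push Not at h1 h2
        nlinarith
  have haS : a ∈ S := hkSD.2 a hak
  have hwS : w ∉ S := by
    intro hwS
    rcases hS x hx z0 hz0 w hwS hxz (hline t) with h | h
    · have : cmb t x z0 = cmb 0 x z0 := by rw [cmb_zero]; exact h
      linarith [cmb_inj_t hxz this]
    · have : cmb t x z0 = cmb 1 x z0 := by rw [cmb_one]; exact h
      linarith [cmb_inj_t hxz this]
  have hs0 : DD x z0 a ≠ 0 := by
    intro h
    have : k = s(x, z0) := by
      refine eq_of_two_pts hS hx hz0 hxz hkSD hwk (mem_segOf_of_mem hak) ?_ (hline _) h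
      intro h; exact hwS (h ▸ haS)
    exact hzG (this ▸ hkG)
  set σ := DD x z0 a with hσ
  let E : Pt → ℝ := fun q => σ * DD x z0 q
  let F : Pt → ℝ := fun q => σ * DD w a q
  have hE_cmb : ∀ u p q, E (cmb u p q) = (1 - u) * E p + u * E q := by
    intro u p q; simp only [E, DD_cmb]; ring
  have hF_cmb : ∀ u p q, F (cmb u p q) = (1 - u) * F p + u * F q := by
    intro u p q; simp only [F, DD_cmb]; ring
  have hEa : 0 < E a := mul_self_pos.2 hs0
  have hEx : E x = 0 := by simp only [E, DD_self1]; ring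
  have hEw : E w = 0 := by simp only [E, hw_def, hline]; ring
  have hFa : F a = 0 := by simp only [F, DD_self2]; ring
  have hFw : F w = 0 := by simp only [F, DD_self1]; ring
  have hFx : 0 < F x := by
    have : F x = t * (σ * σ) := by
      have h1 : DD w a x = t * DD x z0 a := by simp only [hw_def, DD, cmb]; ring
      simp only [F]; rw [h1, ← hσ]; ring
    rw [this]; positivity
  let A := S.filter (fun q => 0 ≤ E q ∧ 0 ≤ F q ∧ 0 < DD x y q)
  have haA : a ∈ A := Finset.mem_filter.2 ⟨haS, hEa.le, hFa.ge, hfa⟩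
  obtain ⟨p, hpA, hpmin⟩ := A.exists_min_image (fun q => E q / DD x y q) ⟨a, haA⟩
  obtain ⟨hpS, hEp0, hFp, hfp⟩ := Finset.mem_filter.1 hpA
  have hxp : x ≠ p := by
    rintro rfl; rw [DD_self1] at hfp; exact lt_irrefl _ hfp
  have hEp : 0 < E p := by
    refine lt_of_le_of_ne hEp0 (fun h => ?_)
    have hD : DD x z0 p = 0 := by
      simp only [E] at h
      exact (mul_eq_zero.1 h.symm).resolve_left hs0
    rcases hS x hx z0 hz0 p hpS hxz hD with h | h
    · exact hxp h.symm
    · -- `p = z0` lies beyond `w`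
      subst h
      have : F w = (1 - t) * F x + t * F p := hF_cmb t x p
      rw [hFw] at this
      nlinarith [mul_pos (sub_pos.2 ht1) hFx]
  let Φ : Pt → ℝ := fun q => E q * DD x y p - E p * DD x y q
  have hΦ_cmb : ∀ u p q, Φ (cmb u p q) = (1 - u) * Φ p + u * Φ q := by
    intro u p q; simp only [Φ, hE_cmb, DD_cmb]; ring
  have hΦA : ∀ q ∈ A, 0 ≤ Φ q := by
    intro q hq
    have h1 := hpmin q hq
    have hfq := (Finset.mem_filter.1 hq).2.2.2
    rw [div_le_div_iff₀ hfp hfq] at h1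
    simp only [Φ]; linarith
  have hΦD : ∀ q, Φ q = σ * DD x y z0 * DD x p q := by
    intro q; simp only [Φ, E]; clear_value σ; simp only [DD]; ring
  have hΦx : Φ x = 0 := by rw [hΦD, DD_self1]; ring
  have hΦp : Φ p = 0 := by rw [hΦD, DD_self2]; ring
  have hΦw : Φ w < 0 := by
    simp only [Φ, hEw]; nlinarith [mul_pos hEp hfw]
  refine ⟨p, hpS, hfp, hG.add hS hx hpS hxp ?_⟩
  intro k' hk' hne w' hw' u hu0 hu1 hw'u a1 ha1 b1 hb1 hD1 hD2
  have hk'SD := hG.1 k' hk'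
  -- x is not an endpoint of k'
  have hxk' : x ∉ k' := by
    intro hxk'
    apply hne
    refine eq_of_two_pts hS hx hpS hxp hk'SD hw' (mem_segOf_of_mem hxk') ?_ ?_ (DD_self1 _ _)
    · intro h
      have : cmb u x p = cmb 0 x p := by rw [cmb_zero, ← hw'u, h]
      linarith [cmb_inj_t hxp this]
    · rw [hw'u, DD_cmb, DD_self1, DD_self2]; ring
  obtain ⟨a', ha'k, hΦa'⟩ : ∃ a' ∈ k', Φ a' < 0 := by
    rcases lt_or_gt_of_ne hs0 with h | h
    · refine ⟨b1, hb1, ?_⟩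
      rw [hΦD]
      exact mul_neg_of_neg_of_pos (mul_neg_of_neg_of_pos h hf) hD2
    · refine ⟨a1, ha1, ?_⟩
      rw [hΦD]
      exact mul_neg_of_pos_of_neg (mul_pos h hf) hD1
  have hΦw' : Φ w' = 0 := by rw [hw'u, hΦ_cmb, hΦx, hΦp]; ring
  have hEw' : 0 < E w' := by rw [hw'u, hE_cmb, hEx]; nlinarith
  have hFw' : 0 < F w' := by
    rw [hw'u, hF_cmb]; nlinarith [mul_pos (sub_pos.2 hu1) hFx, mul_nonneg hu0.le hFp]
  have hfpos : ∀ v, 0 ≤ E v → Φ v < 0 → 0 < DD x y v := by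
    intro v h1 h2
    simp only [Φ] at h2
    by_contra h3
    push Not at h3
    nlinarith [mul_nonneg h1 hfp.le, mul_nonneg hEp.le (neg_nonneg.2 h3)]
  have hkk' : k' ≠ k := by
    rintro rfl
    have : k' = s(w, a) ∨ True := Or.inr trivial
    -- `w'` would be on line `w a`
    clear this
    have hF0 : ∀ v ∈ segOf k', F v = 0 := by
      clear_value w t
      have h1 : F a = 0 := hFa
      have h2 : F w = 0 := hFw
      have hwa : w ≠ a := by rintro rfl; exact hwS haS
      obtain ⟨b, rfl⟩ := hak
      intro v hv
      obtain ⟨m, hm0, hm1, rfl⟩ := mem_segOf.1 hv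
      obtain ⟨n, hn0, hn1, hwn⟩ := mem_segOf.1 hwk
      rw [hwn, hF_cmb, h1] at h2
      have hn : n ≠ 0 := by
        rintro rfl; rw [cmb_zero] at hwn; exact hwa hwn
      have hFb : F b = 0 := by
        have : n * F b = 0 := by linarith
        exact (mul_eq_zero.1 this).resolve_left hn
      rw [hF_cmb, h1, hFb]; ring
    linarith [hF0 w' hw']
  have hnotin : ¬ (0 < E a' ∧ 0 < F a') := by
    rintro ⟨h1, h2⟩
    have : a' ∈ A := Finset.mem_filter.2 ⟨hk'SD.2 a' ha'k, h1.le, h2.le, hfpos a' h1.le hΦa'⟩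
    linarith [hΦA a' this]
  obtain ⟨r, hr0, hr1, hr⟩ := exit_lemma hEw' hFw' hnotin
  rw [← hE_cmb, ← hF_cmb] at hr
  have hvk' : cmb r w' a' ∈ segOf k' := cmb_mem_segOf hw' (mem_segOf_of_mem ha'k) hr0.le hr1
  have hΦv : Φ (cmb r w' a') < 0 := by rw [hΦ_cmb, hΦw']; nlinarith
  set v := cmb r w' a' with hv_def
  clear_value v
  rcases hr with ⟨hEv, hFv⟩ | ⟨hFv, hEv⟩
  · have hfv := hfpos v hEv.ge hΦv
    -- v is on the line x z0
    have hDv : DD x z0 v = 0 := (mul_eq_zero.1 hEv).resolve_left hs0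
    have hvt : v = cmb (DD x y v / DD x y z0) x z0 := by
      have hne0 := hf.ne'
      simp only [DD] at hDv hne0
      ext
      · simp only [cmb, DD]; field_simp; linear_combination (x.1 - y.1) * hDv
      · simp only [cmb, DD]; field_simp; linear_combination (x.2 - y.2) * hDv
    set t' := DD x y v / DD x y z0 with ht'
    have ht'0 : 0 < t' := div_pos hfv hf
    have ht't : t' ≤ t := by
      by_contra hlt
      push Not at hlt
      have h1 : F v = (1 - t') * F x + t' * F z0 := by rw [hvt, hF_cmb]
      have h2 : F w = (1 - t) * F x + t * F z0 := hF_cmb t x z0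
      rw [hFw] at h2
      -- t F v = (t - t') F x < 0
      have h3 : t * F v = (t - t') * F x := by
        rw [h1]; linear_combination (-t') * h2
      have h4 := mul_pos (sub_pos.2 hlt) hFx
      have h5 := mul_nonneg ht0.le hFv
      linarith
    rcases lt_or_eq_of_le ht't with hlt | heq
    · exact hfree k' hk' t' ht'0 hlt (hvt ▸ hvk')
    · have hvw : v = w := by rw [hvt, heq]
      have := hG.2.1 k' hk' k hkG hkk' ⟨hvk', hvw ▸ hwk⟩
      exact hwS (hvw ▸ hk'SD.2 v this.1)
  · -- v on the segment w a
    have hwa : w ≠ a := by rintro h; exact hwS (h ▸ haS)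
    have hvm : v = cmb (E v / E a) w a := by
      have hD : DD w a v = 0 := (mul_eq_zero.1 hFv).resolve_left hs0
      have hra : E v / E a = DD x z0 v / DD x z0 a := by
        simp only [E]; rw [mul_div_mul_left _ _ hs0]
      have hDw : DD x z0 w = 0 := hline t
      rw [hra]
      clear_value w t
      have hs1 : DD x z0 a ≠ 0 := hs0
      simp only [DD] at hD hDw hs1
      ext
      · simp only [cmb, DD]; field_simp
        linear_combination -(z0.1 - x.1) * hD + (v.1 - a.1) * hDw
      · simp only [cmb, DD]; field_simp
        linear_combination -(z0.2 - x.2) * hD + (v.2 - a.2) * hDw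
    set μ := E v / E a with hμ
    have hμ0 : 0 ≤ μ := div_nonneg hEv hEa.le
    have hμ1 : μ ≤ 1 := by
      by_contra hlt
      push Not at hlt
      have h1 : Φ v = (1 - μ) * Φ w + μ * Φ a := by rw [hvm, hΦ_cmb]
      have h2 := hΦA a haA
      have h4 := mul_pos (sub_pos.2 hlt) (neg_pos.2 hΦw)
      have h5 := mul_nonneg hμ0 h2
      linarith
    have hvk : v ∈ segOf k := by
      rw [hvm]; exact cmb_mem_segOf hwk (mem_segOf_of_mem hak) hμ0 hμ1
    have := hG.2.1 k' hk' k hkG hkk' ⟨hvk', hvk⟩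
    have hvS : v ∈ S := hk'SD.2 v this.1
    have hvA : v ∈ A := Finset.mem_filter.2 ⟨hvS, hEv, hFv.ge, hfpos v hEv hΦv⟩
    linarith [hΦA v hvA]

lemma DD_sum (x y z v : Pt) : DD x y v + DD y z v + DD z x v = DD x y z := by
  simp only [DD]; ring

lemma seg_bary {x y z v : Pt} (hD : 0 < DD x y z) (h1 : DD x y v = 0) (h2 : 0 ≤ DD z x v)
    (h3 : 0 ≤ DD y z v) : v ∈ segOf s(x, y) := by
  have hs := DD_sum x y z v
  refine mem_segOf.2 ⟨DD z x v / DD x y z, div_nonneg h2 hD.le, ?_, ?_⟩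
  · rw [div_le_one hD]; linarith
  · have hD' := hD.ne'
    ext
    · simp only [cmb]; field_simp; simp only [DD] at h1 ⊢; linear_combination (z.1 - x.1) * h1
    · simp only [cmb]; field_simp; simp only [DD] at h1 ⊢; linear_combination (z.2 - x.2) * h1

lemma triAB {S : Finset Pt} {G : Finset (Sym2 Pt)} (hG : MaxG S G)
    {x y z : Pt} (hxy : s(x, y) ∈ G) (hxz : s(z, x) ∈ G) (hD : 0 < DD x y z)
    (hnext : ∀ q, s(x, q) ∈ G → 0 < DD x y q → 0 < DD z x q → False)
    {k : Sym2 Pt} (hk : k ∈ G) {w : Pt} (hw : w ∈ segOf k) (h1 : 0 < DD x y w)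
    (h2 : 0 < DD z x w) (h3 : 0 < DD y z w) :
    ∃ a ∈ k, 0 < DD x y a ∧ 0 < DD z x a ∧ DD y z w ≤ DD y z a := by
  have hkx : ∀ hx : x ∈ k, False := by
    rintro ⟨q, rfl⟩
    obtain ⟨t, ht0, ht1, rfl⟩ := mem_segOf.1 hw
    rw [DD_cmb, DD_self1] at h1
    rw [DD_cmb, DD_self2] at h2
    refine hnext q hk ?_ ?_
    · by_contra h; push Not at h; nlinarith
    · by_contra h; push Not at h; nlinarith
  have claim : ∀ a ∈ k, DD y z w ≤ DD y z a → 0 < DD x y a ∧ 0 < DD z x a := by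
    intro a ha hpa
    by_contra hcon
    obtain ⟨t, ht0, ht1, hcase⟩ := exit_lemma h1 h2 hcon
    simp only [← DD_cmb] at hcase
    have hvk : cmb t w a ∈ segOf k := cmb_mem_segOf hw (mem_segOf_of_mem ha) ht0.le ht1
    have hpv : 0 < DD y z (cmb t w a) := by rw [DD_cmb]; nlinarith
    rcases hcase with ⟨e1, e2⟩ | ⟨e1, e2⟩
    · have hv := seg_bary hD e1 e2 hpv.le
      have hne : k ≠ s(x, y) := by
        rintro rfl
        obtain ⟨s, _, _, rfl⟩ := mem_segOf.1 hw
        rw [DD_cmb, DD_self1, DD_self2] at h1; linarith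
      have := hG.2.1 k hk _ hxy hne ⟨hvk, hv⟩
      have hm : cmb t w a ∈ s(x, y) := this.2
      rcases Sym2.mem_iff.1 hm with h | h
      · exact hkx (h ▸ this.1)
      · rw [h, DD_self1] at hpv; exact lt_irrefl _ hpv
    · have hv := seg_bary (x := z) (y := x) (z := y) (by rw [DD_rot]; exact hD) e1 hpv.le e2
      have hne : k ≠ s(z, x) := by
        rintro rfl
        obtain ⟨s, _, _, rfl⟩ := mem_segOf.1 hw
        rw [DD_cmb, DD_self1, DD_self2] at h2; linarith
      have := hG.2.1 k hk _ hxz hne ⟨hvk, hv⟩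
      have hm : cmb t w a ∈ s(z, x) := this.2
      rcases Sym2.mem_iff.1 hm with h | h
      · rw [h, DD_self2] at hpv; exact lt_irrefl _ hpv
      · exact hkx (h ▸ this.1)
  have : ∃ a ∈ k, DD y z w ≤ DD y z a := by
    induction k using Sym2.ind with
    | _ a b =>
      obtain ⟨t, ht0, ht1, rfl⟩ := mem_segOf.1 hw
      rw [DD_cmb]
      rcases le_total (DD y z a) (DD y z b) with h | h
      · exact ⟨b, by simp, by nlinarith⟩
      · exact ⟨a, by simp, by nlinarith⟩
  obtain ⟨a, ha, h⟩ := this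
  exact ⟨a, ha, (claim a ha h).1, (claim a ha h).2, h⟩

lemma tri {S : Finset Pt} {G : Finset (Sym2 Pt)} (hS : GPD S) (hG : MaxG S G)
    {x y z0 : Pt} (hxy : s(x, y) ∈ G) (hz0 : z0 ∈ S) (hf : 0 < DD x y z0) :
    ∃ z ∈ S, 0 < DD x y z ∧ s(x, z) ∈ G ∧ s(y, z) ∈ G ∧
      ∀ k ∈ G, ∀ w ∈ segOf k, 0 < DD x y w → 0 < DD y z w → 0 < DD z x w → False := by
  have hx : x ∈ S := (hG.1 _ hxy).2 x (by simp)
  have hy : y ∈ S := (hG.1 _ hxy).2 y (by simp)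
  have hxyne : x ≠ y := by simpa using (hG.1 _ hxy).1
  let F := S.filter (fun p => 0 < DD x y p ∧ s(x, p) ∈ G)
  have hF : F.Nonempty := by
    obtain ⟨p, hp, h1, h2⟩ := lemN hS hG hx hz0 hf
    exact ⟨p, Finset.mem_filter.2 ⟨hp, h1, h2⟩⟩
  obtain ⟨z, hz, hmin⟩ := F.exists_min_image
    (fun p => -((y.1 - x.1) * (p.1 - x.1) + (y.2 - x.2) * (p.2 - x.2)) / DD x y p) hF
  obtain ⟨hzS, hD, hxz⟩ := Finset.mem_filter.1 hz
  have hnext : ∀ q, s(x, q) ∈ G → 0 < DD x y q → 0 < DD z x q → False := by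
    intro q hq h1 h2
    have hqS : q ∈ S := (hG.1 _ hq).2 q (by simp)
    have := hmin q (Finset.mem_filter.2 ⟨hqS, h1, hq⟩)
    rw [div_le_div_iff₀ hD h1] at this
    have hpos : 0 < (y.1 - x.1) ^ 2 + (y.2 - x.2) ^ 2 := by
      by_contra hc
      push Not at hc
      apply hxyne
      ext <;> nlinarith [sq_nonneg (y.1 - x.1), sq_nonneg (y.2 - x.2)]
    have := mul_pos hpos h2
    simp only [DD] at *
    nlinarith
  have hzx : s(z, x) ∈ G := by rw [Sym2.eq_swap]; exact hxz
  have hemp : ∀ k ∈ G, ∀ w ∈ segOf k, 0 < DD x y w → 0 < DD y z w → 0 < DD z x w → False := by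
    intro k hk w hw h1 h2 h3
    let P := S.filter (fun p => 0 < DD x y p ∧ 0 < DD y z p ∧ 0 < DD z x p)
    have hP : P.Nonempty := by
      obtain ⟨a, ha, e1, e2, e3⟩ := triAB hG hxy hzx hD hnext hk hw h1 h3 h2
      exact ⟨a, Finset.mem_filter.2 ⟨(hG.1 _ hk).2 a ha, e1, by linarith, e2⟩⟩
    obtain ⟨p, hp, hmax⟩ := P.exists_max_image (DD y z) hP
    obtain ⟨hpS, p1, p2, p3⟩ := Finset.mem_filter.1 hp
    have hxp : x ≠ p := by rintro rfl; rw [DD_self1] at p1; exact lt_irrefl _ p1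
    have hxpG : s(x, p) ∈ G := by
      refine hG.add hS hx hpS hxp ?_
      rintro k' hk' - w' hw' t ht0 ht1 hwt - - - - - -
      have q1 : 0 < DD x y w' := by rw [hwt, DD_cmb, DD_self1]; nlinarith
      have q2 : 0 < DD z x w' := by rw [hwt, DD_cmb, DD_self2]; nlinarith
      have hs := DD_sum x y z p
      have q3 : DD y z p < DD y z w' := by
        rw [hwt, DD_cmb, ← DD_rot x y z]; nlinarith
      obtain ⟨a, ha, e1, e2, e3⟩ := triAB hG hxy hzx hD hnext hk' hw' q1 q2 (by linarith)
      have := hmax a (Finset.mem_filter.2 ⟨(hG.1 _ hk').2 a ha, e1, by linarith, e2⟩)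
      linarith
    exact hnext p hxpG p1 p3
  refine ⟨z, hzS, hD, hxz, ?_, hemp⟩
  have hyz : y ≠ z := by rintro rfl; rw [DD_self2] at hD; exact lt_irrefl _ hD
  refine hG.add hS hy hzS hyz ?_
  rintro k hk - w hw t ht0 ht1 hwt - - b hb - hbp
  have q1 : 0 < DD x y w := by rw [hwt, DD_cmb, DD_self2]; nlinarith
  have q2 : 0 < DD z x w := by
    rw [hwt, DD_cmb, DD_self1, DD_rot z x y]; nlinarith
  have q3 : DD y z w = 0 := by rw [hwt, DD_cmb, DD_self1, DD_self2]; ring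
  obtain ⟨s, hs0, hs1, e1, e2⟩ := small_lemma (DD x y b) (DD z x b) q1 q2
  rw [← DD_cmb] at e1 e2
  refine hemp k hk (cmb s w b) (cmb_mem_segOf hw (mem_segOf_of_mem hb) hs0.le hs1) e1 ?_ e2
  rw [DD_cmb, q3]; nlinarith

lemma triInt_pos {p q r u v : Pt} (huv : u ≠ v) (h1 : 0 ≤ DD u v p) (h2 : 0 ≤ DD u v q)
    (h3 : 0 ≤ DD u v r) {w : Pt} (hw : w ∈ triInt p q r) : 0 < DD u v w := by
  have hsub : convexHull ℝ ({p, q, r} : Set Pt) ⊆ {w | 0 ≤ DD u v w} := by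
    refine convexHull_min ?_ ?_
    · intro a ha
      simp only [Set.mem_insert_iff, Set.mem_singleton_iff] at ha
      rcases ha with rfl | rfl | rfl <;> assumption
    · intro a ha b hb s t hs ht hst
      have : DD u v (s • a + t • b) = s * DD u v a + t * DD u v b := by
        obtain rfl : s = 1 - t := by linarith
        simp only [DD, Prod.fst_add, Prod.snd_add, Prod.smul_fst, Prod.smul_snd, smul_eq_mul]
        ring
      simp only [Set.mem_setOf_eq] at *
      rw [this]; positivity
  have hpos : 0 < (v.1 - u.1) ^ 2 + (v.2 - u.2) ^ 2 := by
    by_contra hc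
    push Not at hc
    apply huv
    ext <;> nlinarith [sq_nonneg (v.1 - u.1), sq_nonneg (v.2 - u.2)]
  have hw' : triInt p q r ∈ nhds w := isOpen_interior.mem_nhds hw
  have hc : Continuous (fun t : ℝ => ((w.1 + t * (v.2 - u.2), w.2 - t * (v.1 - u.1)) : Pt)) := by
    fun_prop
  have h0 : Filter.Tendsto (fun t : ℝ => ((w.1 + t * (v.2 - u.2), w.2 - t * (v.1 - u.1)) : Pt))
      (nhds 0) (nhds w) := by
    have := hc.tendsto 0
    simpa using this
  have := h0 hw'
  obtain ⟨ε, hε, hball⟩ := Metric.mem_nhds_iff.1 this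
  have hin : (ε / 2) ∈ Metric.ball (0 : ℝ) ε := by
    rw [Metric.mem_ball, dist_zero_right, Real.norm_of_nonneg (by linarith)]; linarith
  have h4 := hsub (interior_subset (hball hin))
  simp only [Set.mem_setOf_eq, DD] at h4
  simp only [DD]
  nlinarith [mul_pos hε hpos]

lemma triInt_disj {x y z : Pt} (hD : 0 < DD x y z) {k : Sym2 Pt}
    (h : ∀ w ∈ segOf k, 0 < DD x y w → 0 < DD y z w → 0 < DD z x w → False) :
    Disjoint (segOf k) (triInt x y z) := by
  rw [Set.disjoint_left]
  intro w hw hw'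
  have n1 : x ≠ y := by rintro rfl; rw [DD_self0] at hD; exact lt_irrefl _ hD
  have n2 : y ≠ z := by rintro rfl; rw [DD_self2] at hD; exact lt_irrefl _ hD
  have n3 : z ≠ x := by rintro rfl; rw [DD_self1] at hD; exact lt_irrefl _ hD
  refine h w hw (triInt_pos n1 ?_ ?_ ?_ hw') (triInt_pos n2 ?_ ?_ ?_ hw')
    (triInt_pos n3 ?_ ?_ ?_ hw')
  · rw [DD_self1]
  · rw [DD_self2]
  · exact hD.le
  · rw [← DD_rot]; exact hD.le
  · rw [DD_self1]
  · rw [DD_self2]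
  · rw [DD_self2]
  · rw [DD_rot]; exact hD.le
  · rw [DD_self1]

lemma triInt_perm1 (p q r : Pt) : triInt p q r = triInt q p r := by
  simp only [triInt]; congr 2; ext; simp; tauto

lemma triInt_perm2 (p q r : Pt) : triInt p q r = triInt p r q := by
  simp only [triInt]; congr 2; ext; simp; tauto

/-- connectivity of an edge set on S -/
def Conn (S : Finset Pt) (E : Finset (Sym2 Pt)) : Prop :=
  ∀ p ∈ S, ∀ q ∈ S, Relation.ReflTransGen (fun a b => s(a, b) ∈ E) p q

lemma rtg_symm {E : Finset (Sym2 Pt)} {p q : Pt}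
    (h : Relation.ReflTransGen (fun a b => s(a, b) ∈ E) p q) :
    Relation.ReflTransGen (fun a b => s(a, b) ∈ E) q p := by
  induction h with
  | refl => exact .refl
  | tail _ hbc ih => exact Relation.ReflTransGen.head (by rw [Sym2.eq_swap]; exact hbc) ih

lemma rtg_mono {E E' : Finset (Sym2 Pt)} (hE : E ⊆ E') {p q : Pt}
    (h : Relation.ReflTransGen (fun a b => s(a, b) ∈ E) p q) :
    Relation.ReflTransGen (fun a b => s(a, b) ∈ E') p q :=
  Relation.ReflTransGen.mono (fun _ _ h => hE h) _ _ h

lemma conn_card {S : Finset Pt} {E : Finset (Sym2 Pt)} (h1 : ∀ e ∈ E, ∀ p ∈ e, p ∈ S)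
    (hne : S.Nonempty) (hc : Conn S E) : S.card ≤ E.card + 1 := by
  let H : SimpleGraph {p // p ∈ S} :=
    { Adj := fun a b => a ≠ b ∧ s(a.1, b.1) ∈ E
      symm := ⟨fun a b h => ⟨h.1.symm, by rw [Sym2.eq_swap]; exact h.2⟩⟩
      loopless := ⟨fun a h => h.1 rfl⟩ }
  have hreach : ∀ p q : Pt, Relation.ReflTransGen (fun a b => s(a, b) ∈ E) p q →
      ∀ (hp : p ∈ S) (hq : q ∈ S), H.Reachable ⟨p, hp⟩ ⟨q, hq⟩ := by
    intro p q h
    induction h with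
    | refl => intro _ _; exact SimpleGraph.Reachable.refl _
    | @tail b c _ hbc ih =>
      intro hp hq
      have hb : b ∈ S := h1 _ hbc b (by simp)
      refine (ih hp hb).trans ?_
      by_cases hbc' : b = c
      · subst hbc'; exact SimpleGraph.Reachable.refl _
      · exact SimpleGraph.Adj.reachable ⟨by simpa using hbc', hbc⟩
  have hconn : H.Connected := by
    have : Nonempty {p // p ∈ S} := ⟨⟨_, hne.choose_spec⟩⟩
    exact ⟨fun a b => hreach a.1 b.1 (hc _ a.2 _ b.2) a.2 b.2⟩
  have h := hconn.card_vert_le_card_edgeSet_add_one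
  have h2 : Nat.card H.edgeSet ≤ E.card := by
    have : Function.Injective (fun e : H.edgeSet => (⟨Sym2.map Subtype.val e.1, by
        obtain ⟨e, he⟩ := e
        induction e using Sym2.ind with
        | _ a b => exact he.2⟩ : {e // e ∈ E})) := by
      intro e f hef
      have := congrArg Subtype.val hef
      exact Subtype.ext (Sym2.map.injective Subtype.val_injective this)
    have := Nat.card_le_card_of_injective _ this
    simpa using this
  have h3 : Nat.card {p // p ∈ S} = S.card := by simp
  omega

lemma NoCross.mono {E E' : Finset (Sym2 Pt)} (h : NoCross E') (hs : E ⊆ E') : NoCross E :=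
  fun e he f hf => h e (hs he) f (hs hf)

lemma SimEmptyTriRot.refl {S : Finset Pt} {E : Finset (Sym2 Pt)} (h : IsPST S E) :
    SimEmptyTriRot S E E :=
  ⟨h, h, id, by simp [Set.BijOn, Set.MapsTo, Set.InjOn, Set.SurjOn], by simp⟩

lemma SimEmptyTriRot.symm {S : Finset Pt} {E E' : Finset (Sym2 Pt)} (h : SimEmptyTriRot S E E') :
    SimEmptyTriRot S E' E := by
  obtain ⟨h1, h2, π, hb, hp⟩ := h
  refine ⟨h2, h1, Function.invFunOn π ↑(E \ E'), hb.symm ⟨?_, ?_⟩, ?_⟩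
  · exact hb.surjOn.rightInvOn_invFunOn
  · exact hb.injOn.leftInvOn_invFunOn
  · intro e he
    have hme : e ∈ π '' ↑(E \ E') := hb.surjOn (by exact_mod_cast he)
    have h3 : Function.invFunOn π ↑(E \ E') e ∈ (↑(E \ E') : Set (Sym2 Pt)) :=
      Function.invFunOn_mem hme
    have h4 : π (Function.invFunOn π ↑(E \ E') e) = e := Function.invFunOn_eq hme
    obtain ⟨p, q, r, e1, e2, e3⟩ := hp _ (by exact_mod_cast h3)
    refine ⟨p, r, q, by rw [← h4, e2], e1, ?_⟩
    intro g hg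
    rw [triInt_perm2]
    exact e3 g (by rw [Finset.union_comm]; exact hg)

lemma rot_core {S : Finset Pt} {G T : Finset (Sym2 Pt)} (hG : MaxG S G) (hT : IsPST S T)
    (hTG : T ⊆ G) {x y z : Pt} (he : s(x, y) ∈ T) (hf : s(x, z) ∈ G) (hyz : y ≠ z)
    (hR : Relation.ReflTransGen (fun a b => s(a, b) ∈ T.erase s(x, y)) z y)
    (hdis : ∀ g ∈ G, Disjoint (segOf g) (triInt x y z)) :
    SimEmptyTriRot S T (insert s(x, z) (T.erase s(x, y))) ∧
      insert s(x, z) (T.erase s(x, y)) ⊆ G := by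
  have hxy : x ≠ y := by simpa using (hT.1 _ he).1
  have hxz : x ≠ z := by simpa using (hG.1 _ hf).1
  set T' := insert s(x, z) (T.erase s(x, y)) with hT'
  have hsub : T' ⊆ G := by
    intro k hk
    rcases Finset.mem_insert.1 hk with rfl | hk
    · exact hf
    · exact hTG (Finset.mem_of_mem_erase hk)
  have hxS : x ∈ S := (hT.1 _ he).2 x (by simp)
  have hreach : ∀ p, Relation.ReflTransGen (fun a b => s(a, b) ∈ T) p x →
      Relation.ReflTransGen (fun a b => s(a, b) ∈ T.erase s(x, y)) p x ∨
      Relation.ReflTransGen (fun a b => s(a, b) ∈ T.erase s(x, y)) p y := by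
    intro p hp
    induction hp using Relation.ReflTransGen.head_induction_on with
    | refl => exact Or.inl .refl
    | @head a c hac _ ih =>
      by_cases h : s(a, c) = s(x, y)
      · have : a ∈ s(x, y) := by rw [← h]; simp
        rcases Sym2.mem_iff.1 this with rfl | rfl
        · exact Or.inl .refl
        · exact Or.inr .refl
      · have hm : s(a, c) ∈ T.erase s(x, y) := Finset.mem_erase.2 ⟨h, hac⟩
        exact ih.imp (Relation.ReflTransGen.head hm) (Relation.ReflTransGen.head hm)
  have hes : T.erase s(x, y) ⊆ T' := Finset.subset_insert _ _
  have hyx : Relation.ReflTransGen (fun a b => s(a, b) ∈ T') y x := by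
    refine (rtg_symm (rtg_mono hes hR)).tail ?_
    rw [Sym2.eq_swap]; exact Finset.mem_insert_self _ _
  have hall : ∀ p ∈ S, Relation.ReflTransGen (fun a b => s(a, b) ∈ T') p x := by
    intro p hp
    rcases hreach p (hT.2.2.2 p hp x hxS) with h | h
    · exact rtg_mono hes h
    · exact (rtg_mono hes h).trans hyx
  have hconn : Conn S T' := fun p hp q hq => (hall p hp).trans (rtg_symm (hall q hq))
  have hcard := conn_card (fun e he => (hG.1 e (hsub he)).2) ⟨x, hxS⟩ hconn
  have hce : (T.erase s(x, y)).card + 1 = T.card := Finset.card_erase_add_one he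
  have hTc := hT.2.2.1
  have hnot : s(x, z) ∉ T.erase s(x, y) := by
    intro h
    rw [hT', Finset.insert_eq_of_mem h] at hcard
    omega
  have hne : s(x, z) ≠ s(x, y) := by
    intro h
    rw [Sym2.congr_right] at h
    exact hyz h.symm
  have hnT : s(x, z) ∉ T := fun h => hnot (Finset.mem_erase.2 ⟨hne, h⟩)
  have hPST : IsPST S T' := by
    refine ⟨fun e he => hG.1 e (hsub he), hG.2.1.mono hsub, ?_, hconn⟩
    rw [hT', Finset.card_insert_of_notMem hnot]; omega
  have hd1 : T \ T' = {s(x, y)} := by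
    ext k
    simp only [hT', Finset.mem_sdiff, Finset.mem_insert, Finset.mem_erase, Finset.mem_singleton]
    constructor
    · rintro ⟨h1, h2⟩; by_contra h3; exact h2 (Or.inr ⟨h3, h1⟩)
    · rintro rfl
      refine ⟨he, ?_⟩
      rintro (h | h)
      · exact hne h.symm
      · exact h.1 rfl
  have hd2 : T' \ T = {s(x, z)} := by
    ext k
    simp only [hT', Finset.mem_sdiff, Finset.mem_insert, Finset.mem_erase, Finset.mem_singleton]
    constructor
    · rintro ⟨h1 | h1, h2⟩
      · exact h1
      · exact absurd h1.2 h2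
    · rintro rfl
      exact ⟨Or.inl rfl, hnT⟩
  refine ⟨⟨hT, hPST, fun _ => s(x, z), ?_, ?_⟩, hsub⟩
  · rw [hd1, hd2]; simp
  · intro e he'
    rw [hd1, Finset.mem_singleton] at he'
    refine ⟨x, y, z, he', rfl, ?_⟩
    intro g hg
    refine hdis g ?_
    rcases Finset.mem_union.1 hg with h | h
    · exact hTG h
    · exact hsub h

lemma rot_step {S : Finset Pt} {G T : Finset (Sym2 Pt)} (hG : MaxG S G) (hT : IsPST S T)
    (hTG : T ⊆ G) {x y z : Pt} (he : s(x, y) ∈ T) (hD : 0 < DD x y z)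
    (hxz : s(x, z) ∈ G) (hyz : s(y, z) ∈ G)
    (hemp : ∀ k ∈ G, ∀ w ∈ segOf k, 0 < DD x y w → 0 < DD y z w → 0 < DD z x w → False) :
    ∃ f, (f = s(x, z) ∨ f = s(y, z)) ∧ SimEmptyTriRot S T (insert f (T.erase s(x, y))) ∧
      insert f (T.erase s(x, y)) ⊆ G := by
  have hdis : ∀ g ∈ G, Disjoint (segOf g) (triInt x y z) :=
    fun g hg => triInt_disj hD (hemp g hg)
  have hxS : x ∈ S := (hT.1 _ he).2 x (by simp)
  have hzS : z ∈ S := (hG.1 _ hxz).2 z (by simp)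
  have hreach : ∀ p, Relation.ReflTransGen (fun a b => s(a, b) ∈ T) p x →
      Relation.ReflTransGen (fun a b => s(a, b) ∈ T.erase s(x, y)) p x ∨
      Relation.ReflTransGen (fun a b => s(a, b) ∈ T.erase s(x, y)) p y := by
    intro p hp
    induction hp using Relation.ReflTransGen.head_induction_on with
    | refl => exact Or.inl .refl
    | @head a c hac _ ih =>
      by_cases h : s(a, c) = s(x, y)
      · have : a ∈ s(x, y) := by rw [← h]; simp
        rcases Sym2.mem_iff.1 this with rfl | rfl
        · exact Or.inl .refl
        · exact Or.inr .refl
      · have hm : s(a, c) ∈ T.erase s(x, y) := Finset.mem_erase.2 ⟨h, hac⟩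
        exact ih.imp (Relation.ReflTransGen.head hm) (Relation.ReflTransGen.head hm)
  have n2 : y ≠ z := by simpa using (hG.1 _ hyz).1
  have n3 : x ≠ z := by simpa using (hG.1 _ hxz).1
  rcases hreach z (hT.2.2.2 z hzS x hxS) with h | h
  · refine ⟨s(y, z), Or.inr rfl, ?_⟩
    have hsw : s(x, y) = s(y, x) := Sym2.eq_swap
    rw [hsw] at he h ⊢
    exact rot_core hG hT hTG he hyz n3 h (fun g hg => by rw [triInt_perm1]; exact hdis g hg)
  · exact ⟨s(x, z), Or.inl rfl, rot_core hG hT hTG he hxz n2 h hdis⟩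

lemma ReachesIn.refl' {α : Type*} {step : α → α → Prop} (m : ℕ) (x : α) : ReachesIn step m x x :=
  ⟨0, Nat.zero_le _, fun _ => x, rfl, rfl, by simp⟩

lemma ReachesIn.mono' {α : Type*} {step : α → α → Prop} {m m' : ℕ} {x y : α}
    (h : ReachesIn step m x y) (hm : m ≤ m') : ReachesIn step m' x y := by
  obtain ⟨k, hk, f⟩ := h
  exact ⟨k, hk.trans hm, f⟩

lemma ReachesIn.trans' {α : Type*} {step : α → α → Prop} {m m' : ℕ} {x y z : α}
    (h : ReachesIn step m x y) (h' : ReachesIn step m' y z) : ReachesIn step (m + m') x z := by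
  obtain ⟨k, hk, f, f0, fk, hf⟩ := h
  obtain ⟨l, hl, g, g0, gl, hg⟩ := h'
  refine ⟨k + l, by omega, fun i => if i ≤ k then f i else g (i - k), by simp [f0], ?_, ?_⟩
  · by_cases h : l = 0
    · subst h; simp [fk, ← gl, g0]
    · simp [h, gl]
  · intro i hi
    rcases lt_trichotomy i k with h | h | h
    · have := hf i h
      simpa [h.le, Nat.succ_le_of_lt h] using this
    · subst h
      have := hg 0 (by omega)
      simpa [fk, ← g0] using this
    · have := hg (i - k) (by omega)
      have e : i + 1 - k = i - k + 1 := by omega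
      have h1 : ¬ i ≤ k := by omega
      have h2 : ¬ i + 1 ≤ k := by omega
      simpa [h1, h2, e] using this

lemma ReachesIn.symm' {α : Type*} {step : α → α → Prop} (hs : ∀ a b, step a b → step b a)
    {m : ℕ} {x y : α} (h : ReachesIn step m x y) : ReachesIn step m y x := by
  obtain ⟨k, hk, f, f0, fk, hf⟩ := h
  refine ⟨k, hk, fun i => f (k - i), by simp [fk], by simp [f0], ?_⟩
  intro i hi
  have := hs _ _ (hf (k - (i + 1)) (by omega))
  have e : k - (i + 1) + 1 = k - i := by omega
  rw [e] at this
  exact this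

lemma ReachesIn.step' {α : Type*} {step : α → α → Prop} {x y : α} (h : step x y) :
    ReachesIn step 1 x y :=
  ⟨1, le_rfl, fun i => if i = 0 then x else y, by simp, by simp, by
    intro i hi
    obtain rfl : i = 0 := by omega
    simpa using h⟩

lemma ReachesIn.exact' {S : Finset Pt} {m : ℕ} {x y : Finset (Sym2 Pt)} (hx : IsPST S x)
    (h : ReachesIn (SimEmptyTriRot S) m x y) :
    ∃ f : ℕ → Finset (Sym2 Pt), f 0 = x ∧ f m = y ∧
      ∀ i < m, SimEmptyTriRot S (f i) (f (i + 1)) := by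
  obtain ⟨k, hk, f, f0, fk, hf⟩ := h
  have hy : IsPST S (f k) := by
    rcases Nat.eq_zero_or_pos k with h | h
    · subst h; rw [f0]; exact hx
    · have := (hf (k - 1) (by omega)).2.1
      rwa [Nat.sub_add_cancel h] at this
  refine ⟨fun i => f (min i k), by simp [f0], by simp [hk, fk], ?_⟩
  intro i hi
  rcases lt_or_ge i k with h | h
  · have := hf i h
    have e : min (i + 1) k = i + 1 := by omega
    simpa [h.le, e] using this
  · have e : min (i + 1) k = k := by omega
    have e' : min i k = k := by omega
    simp only [e, e']
    exact SimEmptyTriRot.refl hy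

/-- signed offset from the dividing line -/
def ph (L : ℝ × ℝ) (p : Pt) : ℝ := p.1 + L.1 * p.2 - L.2

lemma ph_cmb (L : ℝ × ℝ) (t : ℝ) (a b : Pt) :
    ph L (cmb t a b) = (1 - t) * ph L a + t * ph L b := by
  simp only [ph, cmb]; ring

lemma DD_ph (L : ℝ × ℝ) (p q r : Pt) :
    DD p q r = (ph L q - ph L p) * (r.2 - p.2) - (q.2 - p.2) * (ph L r - ph L p) := by
  simp only [ph, DD]; ring

lemma pt_ext_ph (L : ℝ × ℝ) {p q : Pt} (h1 : ph L p = ph L q) (h2 : p.2 = q.2) : p = q := by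
  ext
  · simp only [ph, h2] at h1; linarith
  · exact h2

/-- height at which an edge crosses the line -/
def HH (L : ℝ × ℝ) (e : Sym2 Pt) : ℝ :=
  Sym2.lift ⟨fun x y => (x.2 * ph L y - y.2 * ph L x) / (ph L y - ph L x), fun x y => by
    beta_reduce; rw [← neg_div_neg_eq]; congr 1 <;> ring⟩ e

lemma HH_mk (L : ℝ × ℝ) (x y : Pt) :
    HH L s(x, y) = (x.2 * ph L y - y.2 * ph L x) / (ph L y - ph L x) := rfl

/-- edges crossing the line -/
def Crs (L : ℝ × ℝ) (e : Sym2 Pt) : Prop := ∃ x y, e = s(x, y) ∧ ph L x < 0 ∧ 0 < ph L y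

lemma Crs_mk {L : ℝ × ℝ} {x y : Pt} : Crs L s(x, y) ↔ ph L x * ph L y < 0 := by
  constructor
  · rintro ⟨a, b, h, h1, h2⟩
    rcases Sym2.eq_iff.1 h with ⟨rfl, rfl⟩ | ⟨rfl, rfl⟩ <;> nlinarith
  · intro h
    rcases mul_neg_iff.1 h with ⟨h1, h2⟩ | ⟨h1, h2⟩
    · exact ⟨y, x, Sym2.eq_swap, h2, h1⟩
    · exact ⟨x, y, rfl, h1, h2⟩

lemma ph_sub_ne {L : ℝ × ℝ} {x y : Pt} (h : ph L x * ph L y < 0) : ph L y - ph L x ≠ 0 := by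
  intro h0
  have : ph L y = ph L x := by linarith
  rw [this] at h
  nlinarith [mul_self_nonneg (ph L x)]

lemma DD_at0 {L : ℝ × ℝ} {x y w : Pt} (h : ph L x * ph L y < 0) (hw : ph L w = 0) :
    DD x y w = (ph L y - ph L x) * (w.2 - HH L s(x, y)) := by
  have := ph_sub_ne h
  rw [HH_mk, DD_ph L, hw]; field_simp; ring

lemma Hpt {L : ℝ × ℝ} {e : Sym2 Pt} (h : Crs L e) :
    ∃ w ∈ segOf e, ph L w = 0 ∧ w.2 = HH L e := by
  obtain ⟨x, y, rfl, hx, hy⟩ := h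
  have hd : 0 < ph L y - ph L x := by linarith
  refine ⟨cmb (-ph L x / (ph L y - ph L x)) x y, mem_segOf.2 ⟨_, ?_, ?_, rfl⟩, ?_, ?_⟩
  · exact div_nonneg (by linarith) hd.le
  · rw [div_le_one hd]; linarith
  · rw [ph_cmb]; field_simp; ring
  · rw [HH_mk]; simp only [cmb]; field_simp; ring

lemma HH_ne {L : ℝ × ℝ} {e f : Sym2 Pt} (he : Crs L e) (hf : Crs L f)
    (hNC : NoCrossPair e f) : HH L e ≠ HH L f := by
  intro h
  obtain ⟨w, hw, w0, w1⟩ := Hpt he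
  obtain ⟨v, hv, v0, v1⟩ := Hpt hf
  obtain rfl : w = v := pt_ext_ph L (by rw [w0, v0]) (by rw [w1, v1, h])
  have := (hNC ⟨hw, hv⟩).1
  obtain ⟨x, y, rfl, hx, hy⟩ := he
  rcases Sym2.mem_iff.1 this with rfl | rfl <;> linarith

lemma Hlt {L : ℝ × ℝ} {x y z : Pt} (h : ph L x * ph L y < 0) (h' : ph L z * ph L y < 0)
    (hD : DD x y z * (ph L y - ph L x) < 0) : HH L s(y, z) < HH L s(x, y) := by
  have n1 := ph_sub_ne h
  have n2 := ph_sub_ne h'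
  have n2' : ph L z - ph L y ≠ 0 := by intro h; apply n2; linarith
  have key : (HH L s(x, y) - HH L s(y, z)) * (ph L y * (ph L y - ph L z) * (ph L y - ph L x) ^ 2)
      = - (ph L y) ^ 2 * (DD x y z * (ph L y - ph L x)) := by
    rw [HH_mk, HH_mk, DD_ph L]; field_simp; ring
  have hy : ph L y ≠ 0 := by intro h0; rw [h0] at h; simp at h
  have p1 : 0 < (ph L y) ^ 2 := by positivity
  have p2 : 0 < (ph L y - ph L x) ^ 2 := by positivity
  have p3 : 0 < ph L y * (ph L y - ph L z) := by nlinarith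
  have p4 := mul_pos p3 p2
  have p5 := mul_neg_of_pos_of_neg p1 hD
  by_contra hc
  push Not at hc
  nlinarith

lemma seg_ph {L : ℝ × ℝ} {x y w : Pt} (h : ph L x * ph L y < 0) (h0 : DD x y w = 0)
    (h1 : (ph L w - ph L x) * (ph L w - ph L y) ≤ 0) : w ∈ segOf s(x, y) := by
  have hd := ph_sub_ne h
  have hd2 : 0 < (ph L y - ph L x) ^ 2 := by positivity
  have ht : 0 ≤ ((ph L w - ph L x) / (ph L y - ph L x)) *
      (1 - (ph L w - ph L x) / (ph L y - ph L x)) := by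
    have : ((ph L w - ph L x) / (ph L y - ph L x)) *
      (1 - (ph L w - ph L x) / (ph L y - ph L x)) =
      (-((ph L w - ph L x) * (ph L w - ph L y))) / (ph L y - ph L x) ^ 2 := by
      field_simp; ring
    rw [this]; exact div_nonneg (by linarith) hd2.le
  refine mem_segOf.2 ⟨(ph L w - ph L x) / (ph L y - ph L x), by nlinarith, by nlinarith, ?_⟩
  apply pt_ext_ph L
  · rw [ph_cmb]; field_simp; ring
  · rw [DD_ph L] at h0
    simp only [cmb]; field_simp; linarith

lemma order {L : ℝ × ℝ} {x y u v : Pt} (hxy : ph L x * ph L y < 0) (huv : ph L u * ph L v < 0)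
    (hvx : 0 < ph L v * ph L x) (hle : |ph L v| ≤ |ph L x|) (hne : v ≠ x)
    (hNC : NoCrossPair s(x, y) s(u, v)) (hH : HH L s(u, v) ≠ HH L s(x, y)) :
    0 < (HH L s(u, v) - HH L s(x, y)) * (DD x y v * (ph L y - ph L x)) := by
  obtain ⟨w, hw, w0, w1⟩ := Hpt (Crs_mk.2 huv)
  have hF := DD_at0 hxy w0
  rw [w1] at hF
  have hd := ph_sub_ne hxy
  have hd2 : 0 < (ph L y - ph L x) ^ 2 := by positivity
  have hF0 : DD x y w ≠ 0 := by
    rw [hF]; exact mul_ne_zero hd (sub_ne_zero.2 hH)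
  have main : 0 < DD x y w * DD x y v := by
    by_contra hc
    push Not at hc
    have hden : DD x y w - DD x y v ≠ 0 := by
      intro h
      have : DD x y v = DD x y w := by linarith
      rw [this] at hc
      have := mul_self_pos.2 hF0
      linarith
    set t := DD x y w / (DD x y w - DD x y v) with ht
    have hden2 : 0 < (DD x y w - DD x y v) ^ 2 := by positivity
    have hsq : 0 < DD x y w ^ 2 := by positivity
    have ht0 : 0 < t := by
      have : t = (DD x y w ^ 2 - DD x y w * DD x y v) / (DD x y w - DD x y v) ^ 2 := by
        rw [ht]; field_simp
      rw [this]; apply div_pos _ hden2; linarith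
    have ht1 : t ≤ 1 := by
      have : 1 - t = (DD x y v ^ 2 - DD x y w * DD x y v) / (DD x y w - DD x y v) ^ 2 := by
        rw [ht]; field_simp; ring
      have h2 : 0 ≤ 1 - t := by
        rw [this]; apply div_nonneg _ hden2.le; nlinarith [sq_nonneg (DD x y v)]
      linarith
    have h0 : DD x y (cmb t w v) = 0 := by
      rw [DD_cmb, ht]; field_simp; ring
    have hph : ph L (cmb t w v) = t * ph L v := by rw [ph_cmb, w0]; ring
    have hv1 : cmb t w v ∈ segOf s(u, v) :=
      cmb_mem_segOf hw (mem_segOf_of_mem (by simp)) ht0.le ht1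
    have hrange : (ph L (cmb t w v) - ph L x) * (ph L (cmb t w v) - ph L y) ≤ 0 := by
      rw [hph]
      rcases mul_pos_iff.1 hvx with ⟨a1, a2⟩ | ⟨a1, a2⟩
      · rw [abs_of_pos a1, abs_of_pos a2] at hle
        have hy : ph L y < 0 := by by_contra h; push Not at h; nlinarith
        apply mul_nonpos_of_nonpos_of_nonneg <;> nlinarith
      · rw [abs_of_neg a1, abs_of_neg a2] at hle
        have hy : 0 < ph L y := by by_contra h; push Not at h; nlinarith
        apply mul_nonpos_of_nonneg_of_nonpos <;> nlinarith
    have hv2 : cmb t w v ∈ segOf s(x, y) := seg_ph hxy h0 hrange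
    have hm := hNC ⟨hv2, hv1⟩
    have hm1 : cmb t w v ∈ s(x, y) := hm.1
    have hm2 : cmb t w v ∈ s(u, v) := hm.2
    have hvp : 0 < t * (ph L v) ^ 2 := by
      have : ph L v ≠ 0 := by intro h; rw [h] at hvx; simp at hvx
      positivity
    rcases Sym2.mem_iff.1 hm1 with e1 | e1
    · rcases Sym2.mem_iff.1 hm2 with e2 | e2
      · rw [e2] at hph; rw [hph] at huv; nlinarith
      · exact hne (e2.symm.trans e1)
    · rw [e1] at hph; rw [hph] at hxy
      nlinarith [mul_pos ht0 hvx]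
  rw [hF] at main
  have e : (HH L s(u, v) - HH L s(x, y)) * (DD x y v * (ph L y - ph L x)) =
    (ph L y - ph L x) * (HH L s(u, v) - HH L s(x, y)) * DD x y v := by ring
  rw [e]; exact main

/-- l r is the lower bridge across the line -/
def IsB (L : ℝ × ℝ) (S : Finset Pt) (l r : Pt) : Prop :=
  l ∈ S ∧ r ∈ S ∧ ph L l < 0 ∧ 0 < ph L r ∧ ∀ p ∈ S, 0 ≤ DD l r p

lemma exists_B {L : ℝ × ℝ} {S : Finset Pt} (hφ : ∀ p ∈ S, ph L p ≠ 0)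
    (h1 : ∃ p ∈ S, ph L p < 0) (h2 : ∃ p ∈ S, 0 < ph L p) : ∃ l r, IsB L S l r := by
  obtain ⟨l0, hl0, l00⟩ := h1
  obtain ⟨r0, hr0, r00⟩ := h2
  let P := (S ×ˢ S).filter (fun q => ph L q.1 < 0 ∧ 0 < ph L q.2)
  have hP : P.Nonempty := ⟨(l0, r0), by simp [P, hl0, hr0, l00, r00]⟩
  obtain ⟨⟨l, r⟩, hq, hmin⟩ := P.exists_min_image (fun q => HH L s(q.1, q.2)) hP
  simp only [P, Finset.mem_filter, Finset.mem_product] at hq hmin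
  obtain ⟨⟨hl, hr⟩, l0, r0⟩ := hq
  refine ⟨l, r, hl, hr, l0, r0, ?_⟩
  intro p hp
  by_contra hc
  push Not at hc
  have hlr : ph L l * ph L r < 0 := mul_neg_of_neg_of_pos l0 r0
  rcases lt_or_gt_of_ne (hφ p hp) with h | h
  · have := Hlt (L := L) (x := l) (y := r) (z := p) hlr (mul_neg_of_neg_of_pos h r0)
      (mul_neg_of_neg_of_pos hc (by linarith))
    have h3 := hmin (p, r) ⟨⟨hp, hr⟩, h, r0⟩
    rw [Sym2.eq_swap] at this
    simp only at h3
    linarith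
  · have := Hlt (L := L) (x := r) (y := l) (z := p) (mul_neg_of_pos_of_neg r0 l0)
      (mul_neg_of_pos_of_neg h l0)
      (by rw [DD_swap]; exact mul_neg_of_pos_of_neg (by linarith) (by linarith))
    have h3 := hmin (l, p) ⟨⟨hl, hp⟩, l0, h⟩
    rw [Sym2.eq_swap (a := r)] at this
    simp only at h3
    linarith

lemma IsB.ne {L : ℝ × ℝ} {S : Finset Pt} {l r : Pt} (h : IsB L S l r) : l ≠ r := by
  rintro rfl; linarith [h.2.2.1, h.2.2.2.1]

lemma IsB.crs {L : ℝ × ℝ} {S : Finset Pt} {l r : Pt} (h : IsB L S l r) : Crs L s(l, r) :=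
  ⟨l, r, rfl, h.2.2.1, h.2.2.2.1⟩

lemma IsB.mem {L : ℝ × ℝ} {S : Finset Pt} {G : Finset (Sym2 Pt)} {l r : Pt} (h : IsB L S l r)
    (hS : GPD S) (hG : MaxG S G) : s(l, r) ∈ G := by
  refine hG.add hS h.1 h.2.1 h.ne ?_
  intro k hk _ _ _ _ _ _ _ a ha _ _ h1 _
  linarith [h.2.2.2.2 a ((hG.1 k hk).2 a ha)]

lemma IsB.H_le {L : ℝ × ℝ} {S : Finset Pt} {l r : Pt} (h : IsB L S l r) {e : Sym2 Pt}
    (he : Crs L e) (heS : ∀ p ∈ e, p ∈ S) : HH L s(l, r) ≤ HH L e := by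
  obtain ⟨w, hw, w0, w1⟩ := Hpt he
  have h1 := DD_at0 (Crs_mk.1 h.crs) w0
  have h2 : 0 ≤ DD l r w := by
    induction e using Sym2.ind with
    | _ a b =>
      obtain ⟨t, t0, t1, rfl⟩ := mem_segOf.1 hw
      rw [DD_cmb]
      have := h.2.2.2.2 a (heS a (by simp))
      have := h.2.2.2.2 b (heS b (by simp))
      have := sub_nonneg.2 t1
      positivity
  rw [h1, w1] at h2
  by_contra hc
  push Not at hc
  nlinarith [h.2.2.1, h.2.2.2.1]

lemma succ_edge {L : ℝ × ℝ} {S : Finset Pt} {G : Finset (Sym2 Pt)} {l r : Pt} (hb : IsB L S l r)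
    (hS : GPD S) (hG : MaxG S G) (hφ : ∀ p ∈ S, ph L p ≠ 0) {e : Sym2 Pt} (heG : e ∈ G)
    (he : Crs L e) (hne : e ≠ s(l, r)) :
    ∃ x y z : Pt, e = s(x, y) ∧ ph L x * ph L y < 0 ∧ 0 < ph L z * ph L x ∧
      DD x y z * (ph L y - ph L x) < 0 ∧ s(y, z) ∈ G ∧ HH L s(y, z) < HH L s(x, y) ∧
      (∀ g ∈ G, Crs L g → HH L s(y, z) < HH L g → HH L g < HH L s(x, y) → False) ∧
      (∀ T, IsPST S T → T ⊆ G → e ∈ T → ∃ T', SimEmptyTriRot S T T' ∧ T' ⊆ G ∧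
        ∀ k ∈ T', Crs L k → k = s(y, z) ∨ (k ∈ T ∧ k ≠ e)) := by
  have hbG := hb.mem hS hG
  have hHne : HH L s(l, r) < HH L e := by
    refine lt_of_le_of_ne (hb.H_le he (hG.1 e heG).2) ?_
    exact HH_ne hb.crs he (hG.2.1 _ hbG _ heG (Ne.symm hne))
  obtain ⟨p, q, rfl, hp, hq⟩ := he
  have hpq : ph L p * ph L q < 0 := mul_neg_of_neg_of_pos hp hq
  have hz0 : ∃ z0 ∈ S, 0 < DD q p z0 := by
    by_contra hc
    push Not at hc
    obtain ⟨w, hw, w0, w1⟩ := Hpt hb.crs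
    have h1 := DD_at0 hpq w0
    have h2 : 0 ≤ DD p q w := by
      obtain ⟨t, t0, t1, rfl⟩ := mem_segOf.1 hw
      rw [DD_cmb, DD_swap, DD_swap p q]
      have a1 := hc l hb.1
      have a2 := hc r hb.2.1
      have := sub_nonneg.2 t1
      nlinarith
    rw [h1, w1] at h2
    nlinarith
  obtain ⟨z0, hz0S, hz0⟩ := hz0
  have hqpG : s(q, p) ∈ G := by rw [Sym2.eq_swap]; exact heG
  obtain ⟨z, hzS, hD, hqz, hpz, hemp⟩ := tri hS hG hqpG hz0S hz0
  have hD' : DD p q z < 0 := by rw [DD_swap]; linarith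
  have hrot : ∀ T, IsPST S T → T ⊆ G → s(p, q) ∈ T → ∃ f T', (f = s(q, z) ∨ f = s(p, z)) ∧
      SimEmptyTriRot S T T' ∧ T' ⊆ G ∧ ∀ k ∈ T', k = f ∨ (k ∈ T ∧ k ≠ s(p, q)) := by
    intro T hT hTG heT
    rw [Sym2.eq_swap] at heT
    obtain ⟨f, hf, h1, h2⟩ := rot_step hG hT hTG heT hD hqz hpz hemp
    refine ⟨f, _, hf, h1, h2, ?_⟩
    intro k hk
    rcases Finset.mem_insert.1 hk with h | h
    · exact Or.inl h
    · rw [Sym2.eq_swap (a := p)]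
      exact Or.inr ⟨Finset.mem_of_mem_erase h, Finset.ne_of_mem_erase h⟩
  have hbary : ∀ w, DD q p z * ph L w =
      DD p z w * ph L q + DD z q w * ph L p + DD q p w * ph L z := by
    intro w; simp only [DD, ph]; ring
  rcases lt_or_gt_of_ne (hφ z hzS) with hz | hz
  · have hzq : ph L z * ph L q < 0 := mul_neg_of_neg_of_pos hz hq
    have hDD : DD p q z * (ph L q - ph L p) < 0 := mul_neg_of_neg_of_pos hD' (by linarith)
    refine ⟨p, q, z, rfl, hpq, mul_pos_of_neg_of_neg hz hp, hDD, hqz, Hlt hpq hzq hDD, ?_, ?_⟩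
    · intro g hg hgc h1 h2
      obtain ⟨w, hw, w0, w1⟩ := Hpt hgc
      have e1 := DD_at0 hpq w0
      have e2 := DD_at0 hzq w0
      rw [Sym2.eq_swap (a := z), w1] at e2
      rw [w1] at e1
      have d1 : 0 < DD q p w := by rw [DD_swap, e1]; nlinarith
      have d2 : 0 < DD z q w := by rw [e2]; nlinarith
      have d3 : 0 < DD p z w := by
        have := hbary w
        rw [w0] at this
        by_contra hc
        push Not at hc
        nlinarith [mul_pos d1 (neg_pos.2 hz), mul_pos d2 (neg_pos.2 hp)]
      exact hemp g hg w hw d1 d3 d2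
    · intro T hT hTG heT
      obtain ⟨f, T', hf, h1, h2, h3⟩ := hrot T hT hTG heT
      refine ⟨T', h1, h2, ?_⟩
      intro k hk hkc
      refine (h3 k hk).imp_left ?_
      rintro rfl
      rcases hf with hf | hf
      · exact hf
      · rw [hf, Crs_mk] at hkc; nlinarith
  · have hzp : ph L z * ph L p < 0 := mul_neg_of_pos_of_neg hz hp
    have hqp : ph L q * ph L p < 0 := mul_neg_of_pos_of_neg hq hp
    have hDD : DD q p z * (ph L p - ph L q) < 0 := mul_neg_of_pos_of_neg hD (by linarith)
    refine ⟨q, p, z, Sym2.eq_swap, hqp, mul_pos hz hq, hDD, hpz, Hlt hqp hzp hDD, ?_, ?_⟩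
    · intro g hg hgc h1 h2
      obtain ⟨w, hw, w0, w1⟩ := Hpt hgc
      have e1 := DD_at0 hqp w0
      have e2 := DD_at0 (x := p) (y := z) (by linarith) w0
      rw [w1] at e1 e2
      have d1 : 0 < DD q p w := by rw [e1]; nlinarith
      have d2 : 0 < DD p z w := by rw [e2]; nlinarith
      have d3 : 0 < DD z q w := by
        have := hbary w
        rw [w0] at this
        by_contra hc
        push Not at hc
        nlinarith [mul_pos d1 hz, mul_pos d2 hq]
      exact hemp g hg w hw d1 d2 d3
    · intro T hT hTG heT
      obtain ⟨f, T', hf, h1, h2, h3⟩ := hrot T hT hTG heT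
      refine ⟨T', h1, h2, ?_⟩
      intro k hk hkc
      refine (h3 k hk).imp_left ?_
      rintro rfl
      rcases hf with hf | hf
      · rw [hf, Crs_mk] at hkc; nlinarith
      · exact hf

lemma sweep {L : ℝ × ℝ} {S : Finset Pt} {G : Finset (Sym2 Pt)} {l r : Pt} (hb : IsB L S l r)
    (hS : GPD S) (hG : MaxG S G) (hφ : ∀ p ∈ S, ph L p ≠ 0) :
    ∀ N : ℕ, ∀ T, IsPST S T → T ⊆ G → ∀ e ∈ G, Crs L e →
      (∀ f ∈ T, Crs L f → HH L f ≤ HH L e) →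
      (G.filter (fun f => Crs L f ∧ HH L f < HH L e)).card ≤ N →
      ∃ T1, IsPST S T1 ∧ T1 ⊆ G ∧ (∀ f ∈ T1, Crs L f → f = s(l, r)) ∧
        ReachesIn (SimEmptyTriRot S) N T T1 := by
  intro N
  induction N with
  | zero =>
    intro T hT hTG e heG he hle hN
    refine ⟨T, hT, hTG, ?_, ReachesIn.refl' _ _⟩
    intro f hf hfc
    by_contra hne
    have h1 := hb.H_le hfc (hG.1 f (hTG hf)).2
    have h2 := HH_ne hb.crs hfc (hG.2.1 _ (hb.mem hS hG) _ (hTG hf) (Ne.symm hne))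
    have h3 := hle f hf hfc
    have h4 : s(l, r) ∈ (G.filter (fun f => Crs L f ∧ HH L f < HH L e)) :=
      Finset.mem_filter.2 ⟨hb.mem hS hG, hb.crs, lt_of_lt_of_le (lt_of_le_of_ne h1 h2) h3⟩
    have := Finset.card_pos.2 ⟨_, h4⟩
    omega
  | succ N ih =>
    intro T hT hTG e heG he hle hN
    by_cases heb : e = s(l, r)
    · refine ⟨T, hT, hTG, ?_, ReachesIn.refl' _ _⟩
      intro f hf hfc
      by_contra hne
      have h1 := hb.H_le hfc (hG.1 f (hTG hf)).2
      have h2 := HH_ne hb.crs hfc (hG.2.1 _ (hb.mem hS hG) _ (hTG hf) (Ne.symm hne))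
      have h3 := hle f hf hfc
      rw [heb] at h3
      exact h2 (le_antisymm h1 h3)
    · obtain ⟨x, y, z, rfl, hxy, hzx, _, hyz, hH, hbet, hrot⟩ := succ_edge hb hS hG hφ heG he heb
      have hyzc : Crs L s(y, z) := by
        rw [Crs_mk]
        by_contra hc
        push Not at hc
        have hx : 0 < ph L x ^ 2 := by
          have : ph L x ≠ 0 := by intro h; rw [h] at hxy; simp at hxy
          positivity
        have hy : 0 < ph L z ^ 2 := by
          have : ph L z ≠ 0 := by intro h; rw [h] at hzx; simp at hzx
          positivity
        nlinarith [mul_pos hzx (neg_pos.2 hxy)]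
      have hcard : (G.filter (fun f => Crs L f ∧ HH L f < HH L s(y, z))).card ≤ N := by
        have : (G.filter (fun f => Crs L f ∧ HH L f < HH L s(y, z))) ⊂
            (G.filter (fun f => Crs L f ∧ HH L f < HH L s(x, y))) := by
          rw [Finset.ssubset_iff_of_subset]
          · refine ⟨s(y, z), Finset.mem_filter.2 ⟨hyz, hyzc, hH⟩, ?_⟩
            intro h; exact lt_irrefl _ (Finset.mem_filter.1 h).2.2
          · intro f hf
            obtain ⟨a, b, c⟩ := Finset.mem_filter.1 hf
            exact Finset.mem_filter.2 ⟨a, b, c.trans hH⟩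
        have := Finset.card_lt_card this
        omega
      have hlow : ∀ f ∈ G, Crs L f → HH L f ≤ HH L s(x, y) → f ≠ s(x, y) →
          HH L f ≤ HH L s(y, z) := by
        intro f hf hfc h1 h2
        by_contra h3
        push Not at h3
        exact hbet f hf hfc h3 (lt_of_le_of_ne h1 (HH_ne hfc he (hG.2.1 _ hf _ heG h2)))
      by_cases heT : s(x, y) ∈ T
      · obtain ⟨T', hs, hT'G, hk⟩ := hrot T hT hTG heT
        obtain ⟨T1, a1, a2, a3, a4⟩ := ih T' hs.2.1 hT'G s(y, z) hyz hyzc (by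
          intro f hf hfc
          rcases hk f hf hfc with rfl | ⟨h1, h2⟩
          · exact le_rfl
          · exact hlow f (hTG h1) hfc (hle f h1 hfc) h2) hcard
        refine ⟨T1, a1, a2, a3, ?_⟩
        exact ((ReachesIn.step' hs).trans' a4).mono' (by omega)
      · obtain ⟨T1, a1, a2, a3, a4⟩ := ih T hT hTG s(y, z) hyz hyzc (by
          intro f hf hfc
          exact hlow f (hTG hf) hfc (hle f hf hfc) (by rintro rfl; exact heT hf)) hcard
        exact ⟨T1, a1, a2, a3, a4.mono' (by omega)⟩

lemma cross_count {L : ℝ × ℝ} {S : Finset Pt} {G : Finset (Sym2 Pt)} {l r : Pt}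
    (hb : IsB L S l r) (hS : GPD S) (hG : MaxG S G) (hφ : ∀ p ∈ S, ph L p ≠ 0) :
    (G.filter (Crs L)).card + 1 ≤ 2 * S.card := by
  set C' := (G.filter (Crs L)).erase s(l, r) with hC'
  have hbG := hb.mem hS hG
  have hC'card : C'.card + 1 = (G.filter (Crs L)).card :=
    Finset.card_erase_add_one (Finset.mem_filter.2 ⟨hbG, hb.crs⟩)
  have hmem : ∀ e ∈ C', e ∈ G ∧ Crs L e ∧ e ≠ s(l, r) := by
    intro e he
    have h1 := Finset.mem_filter.1 (Finset.mem_of_mem_erase he)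
    exact ⟨h1.1, h1.2, Finset.ne_of_mem_erase he⟩
  have hHinj : ∀ e ∈ G, ∀ f ∈ G, Crs L e → Crs L f → HH L e = HH L f → e = f := by
    intro e he f hf hec hfc h
    by_contra hne
    exact HH_ne hec hfc (hG.2.1 e he f hf hne) h
  have hex : ∀ e ∈ C', ∃ x y z : Pt, e = s(x, y) ∧ ph L x * ph L y < 0 ∧ 0 < ph L z * ph L x ∧
      DD x y z * (ph L y - ph L x) < 0 ∧ s(y, z) ∈ G ∧ HH L s(y, z) < HH L s(x, y) ∧
      (∀ g ∈ G, Crs L g → HH L s(y, z) < HH L g → HH L g < HH L s(x, y) → False) := by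
    intro e he
    obtain ⟨h1, h2, h3⟩ := hmem e he
    obtain ⟨x, y, z, a1, a2, a3, a4, a5, a6, a7, _⟩ := succ_edge hb hS hG hφ h1 h2 h3
    exact ⟨x, y, z, a1, a2, a3, a4, a5, a6, a7⟩
  choose! X Y Z hX using hex
  set P : Sym2 Pt → Prop := fun e => ∀ g ∈ G, Crs L g → X e ∈ g → HH L e ≤ HH L g with hP
  have hA : (C'.filter P).card ≤ ((S.erase l).erase r).card := by
    refine Finset.card_le_card_of_injOn X ?_ ?_
    · intro e he
      obtain ⟨he, hPe⟩ := Finset.mem_filter.1 (Finset.mem_coe.1 he)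
      obtain ⟨h1, h2, h3⟩ := hmem e he
      have hXe : X e ∈ e := ⟨Y e, (hX e he).1⟩
      have hnb : X e ∉ s(l, r) := by
        intro h
        have a1 := hPe _ hbG hb.crs h
        have a2 := hb.H_le h2 (hG.1 e h1).2
        exact h3 (hHinj e h1 _ hbG h2 hb.crs (le_antisymm a1 a2))
      simp only [Sym2.mem_iff, not_or] at hnb
      exact Finset.mem_coe.2 (Finset.mem_erase.2 ⟨hnb.2, Finset.mem_erase.2
        ⟨hnb.1, (hG.1 e h1).2 _ hXe⟩⟩)
    · intro e he f hf hef
      obtain ⟨he, hPe⟩ := Finset.mem_filter.1 (Finset.mem_coe.1 he)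
      obtain ⟨hf, hPf⟩ := Finset.mem_filter.1 (Finset.mem_coe.1 hf)
      obtain ⟨h1, h2, h3⟩ := hmem e he
      obtain ⟨k1, k2, k3⟩ := hmem f hf
      have hXe : X e ∈ e := ⟨Y e, (hX e he).1⟩
      have hXf : X f ∈ f := ⟨Y f, (hX f hf).1⟩
      exact hHinj e h1 f k1 h2 k2 (le_antisymm (hPe f k1 k2 (hef ▸ hXf)) (hPf e h1 h2 (hef ▸ hXe)))
  have htop : ∀ e ∈ C', ¬ P e → Crs L s(Y e, Z e) ∧
      ∀ h ∈ G, Crs L h → Z e ∈ h → HH L h ≤ HH L s(Y e, Z e) := by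
    intro e he hnP
    obtain ⟨h1, h2, h3⟩ := hmem e he
    obtain ⟨a1, hxy, hzx, hD, hyz, hH, hbet⟩ := hX e he
    simp only [hP] at hnP
    push Not at hnP
    obtain ⟨g, hgG, hgc, hxg, hgH⟩ := hnP
    generalize X e = x at *
    generalize Y e = y at *
    generalize Z e = z at *
    subst a1
    have hx0 : ph L x ≠ 0 := by intro h; rw [h] at hxy; simp at hxy
    have hx2 : 0 < ph L x ^ 2 := by positivity
    have hyzc : ph L y * ph L z < 0 := by
      by_contra hc
      push Not at hc
      have hz0 : ph L z ≠ 0 := by intro h; rw [h] at hzx; simp at hzx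
      nlinarith [mul_pos hzx (neg_pos.2 hxy)]
    have hzxne : z ≠ x := by rintro rfl; rw [DD_self1] at hD; simp at hD
    have hyxne : y ≠ x := by rintro rfl; nlinarith [mul_self_nonneg (ph L y)]
    have hzyne : z ≠ y := by rintro rfl; rw [DD_self2] at hD; simp at hD
    refine ⟨Crs_mk.2 hyzc, ?_⟩
    intro h hhG hhc hzh
    by_contra hlt
    push Not at hlt
    have hge' : g ≠ s(y, z) := by
      rintro rfl
      rcases Sym2.mem_iff.1 hxg with h | h
      · exact hyxne h.symm
      · exact hzxne h.symm
    have hgH' : HH L g < HH L s(y, z) := by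
      by_contra hc
      push Not at hc
      exact hbet g hgG hgc (lt_of_le_of_ne hc
        (HH_ne (Crs_mk.2 hyzc) hgc (hG.2.1 _ hyz _ hgG (Ne.symm hge')))) hgH
    have hhe : h ≠ s(x, y) := by
      rintro rfl
      rcases Sym2.mem_iff.1 hzh with h | h
      · exact hzxne h
      · exact hzyne h
    have hhH : HH L s(x, y) < HH L h := by
      by_contra hc
      push Not at hc
      exact hbet h hhG hhc hlt (lt_of_le_of_ne hc (HH_ne hhc h2 (hG.2.1 _ hhG _ h1 hhe)))
    rcases le_total |ph L z| |ph L x| with hle | hle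
    · obtain ⟨u, rfl⟩ := hzh
      rw [Sym2.eq_swap (a := z)] at hhG hhc hhe hhH
      have := order hxy (Crs_mk.1 hhc) hzx hle hzxne (hG.2.1 _ h1 _ hhG (Ne.symm hhe)) hhH.ne'
      nlinarith
    · obtain ⟨u, rfl⟩ := hxg
      rw [Sym2.eq_swap (a := x)] at hgG hgc hge' hgH'
      rw [Sym2.eq_swap (a := y)] at hyz hge' hgH' hH
      rw [Sym2.eq_swap (a := x)] at hH h1 h2
      have hxz : 0 < ph L x * ph L z := by linarith
      have hzy : ph L z * ph L y < 0 := by linarith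
      have hne2 : s(z, y) ≠ s(y, x) := by
        intro h
        have : z ∈ s(y, x) := by rw [← h]; simp
        rcases Sym2.mem_iff.1 this with h | h
        · exact hzyne h
        · exact hzxne h
      have b1 := order hzy (Crs_mk.1 hgc) hxz hle hzxne.symm
        (hG.2.1 _ hyz _ hgG (Ne.symm hge')) hgH'.ne
      have b2 := order hzy (Crs_mk.1 h2) hxz hle hzxne.symm
        (hG.2.1 _ hyz _ h1 hne2) hH.ne'
      have b3 := (pos_iff_pos_of_mul_pos b2).1 (by linarith)
      nlinarith
  have hB : (C'.filter (fun e => ¬ P e)).card ≤ S.card := by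
    refine Finset.card_le_card_of_injOn Z ?_ ?_
    · intro e he
      obtain ⟨he, hPe⟩ := Finset.mem_filter.1 (Finset.mem_coe.1 he)
      exact Finset.mem_coe.2 ((hG.1 _ (hX e he).2.2.2.2.1).2 _ (by simp))
    · intro e he f hf hef
      obtain ⟨he, hPe⟩ := Finset.mem_filter.1 (Finset.mem_coe.1 he)
      obtain ⟨hf, hPf⟩ := Finset.mem_filter.1 (Finset.mem_coe.1 hf)
      obtain ⟨h1, h2, h3⟩ := hmem e he
      obtain ⟨k1, k2, k3⟩ := hmem f hf
      obtain ⟨ec, et⟩ := htop e he hPe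
      obtain ⟨fc, ft⟩ := htop f hf hPf
      obtain ⟨a1, _, _, _, eG, eH, ebet⟩ := hX e he
      obtain ⟨b1, _, _, _, fG, fH, fbet⟩ := hX f hf
      have c1 := et _ fG fc (by rw [hef]; simp)
      have c2 := ft _ eG ec (by rw [← hef]; simp)
      rw [← a1] at eH ebet
      rw [← b1] at fH fbet
      apply hHinj e h1 f k1 h2 k2
      rcases lt_trichotomy (HH L e) (HH L f) with h | h | h
      · exact (fbet e h1 h2 (lt_of_le_of_lt c1 eH) h).elim
      · exact h
      · exact (ebet f k1 k2 (lt_of_le_of_lt c2 fH) h).elim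
  have hsum := Finset.card_filter_add_card_filter_not (s := C') P
  have e1 : (S.erase l).card + 1 = S.card := Finset.card_erase_add_one hb.1
  have e2 : ((S.erase l).erase r).card + 1 = (S.erase l).card :=
    Finset.card_erase_add_one (Finset.mem_erase.2 ⟨hb.ne.symm, hb.2.1⟩)
  omega

lemma sweep_main {L : ℝ × ℝ} {S : Finset Pt} {l r : Pt}
    (hb : IsB L S l r) (hS : GPD S) (hφ : ∀ p ∈ S, ph L p ≠ 0) {T : Finset (Sym2 Pt)}
    (hT : IsPST S T) :
    ∃ T1, IsPST S T1 ∧ (∀ f ∈ T1, Crs L f → f = s(l, r)) ∧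
        ReachesIn (SimEmptyTriRot S) (2 * S.card - 2) T T1 := by
  obtain ⟨G, hTG, hG⟩ := exists_MaxG hT.1 hT.2.1
  have hbG := hb.mem hS hG
  have hne : (G.filter (Crs L)).Nonempty := ⟨_, Finset.mem_filter.2 ⟨hbG, hb.crs⟩⟩
  obtain ⟨e, he, hmax⟩ := Finset.exists_max_image _ (HH L) hne
  obtain ⟨heG, hec⟩ := Finset.mem_filter.1 he
  have hcount := cross_count hb hS hG hφ
  obtain ⟨T1, a1, _, a3, a4⟩ := sweep hb hS hG hφ (2 * S.card - 2) T hT hTG e heG hec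
    (fun f hf hfc => hmax f (Finset.mem_filter.2 ⟨hTG hf, hfc⟩)) (by
      have hsub : (G.filter (fun f => Crs L f ∧ HH L f < HH L e)) ⊆ (G.filter (Crs L)).erase e := by
        intro f hf
        obtain ⟨b1, b2, b3⟩ := Finset.mem_filter.1 hf
        exact Finset.mem_erase.2 ⟨by rintro rfl; exact lt_irrefl _ b3,
          Finset.mem_filter.2 ⟨b1, b2⟩⟩
      have h1 := Finset.card_le_card hsub
      have h2 := Finset.card_erase_add_one he
      omega)
  exact ⟨T1, a1, a3, a4⟩

lemma exists_lower {S : Finset Pt} (f : Pt → ℝ) (hf : Set.InjOn f S) (m : ℕ) (hm : m ≤ S.card) :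
    ∃ lo ⊆ S, lo.card = m ∧ ∀ x ∈ lo, ∀ y ∈ S \ lo, f x < f y := by
  induction m with
  | zero => exact ⟨∅, by simp, by simp, by simp⟩
  | succ m ih =>
    obtain ⟨lo, hlo, hc, hlt⟩ := ih (by omega)
    have hne : (S \ lo).Nonempty := by
      rw [← Finset.card_pos, Finset.card_sdiff_of_subset hlo]; omega
    obtain ⟨y0, hy0, hmin⟩ := (S \ lo).exists_min_image f hne
    have hy0' := Finset.mem_sdiff.1 hy0
    refine ⟨insert y0 lo, ?_, ?_, ?_⟩
    · intro p hp
      rcases Finset.mem_insert.1 hp with rfl | h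
      · exact hy0'.1
      · exact hlo h
    · rw [Finset.card_insert_of_notMem hy0'.2, hc]
    · intro x hx y hy
      obtain ⟨hyS, hyn⟩ := Finset.mem_sdiff.1 hy
      simp only [Finset.mem_insert, not_or] at hyn
      have hy' : y ∈ S \ lo := Finset.mem_sdiff.2 ⟨hyS, hyn.2⟩
      rcases Finset.mem_insert.1 hx with rfl | h
      · refine lt_of_le_of_ne (hmin y hy') ?_
        intro h
        exact hyn.1 (hf hyS hy0'.1 h.symm)
      · exact hlt x h y hy'

lemma exists_line (S : Finset Pt) (m : ℕ) (hm : m ≤ S.card) :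
    ∃ L : ℝ × ℝ, (∀ p ∈ S, ph L p ≠ 0) ∧ (S.filter (fun p => ph L p < 0)).card = m := by
  obtain ⟨ε, hε⟩ := Infinite.exists_notMem_finset
    ((S ×ˢ S).image (fun q => -(q.1.1 - q.2.1) / (q.1.2 - q.2.2)))
  have hinj : Set.InjOn (fun p : Pt => p.1 + ε * p.2) S := by
    intro p hp q hq h
    simp only at h
    by_cases h2 : p.2 = q.2
    · rw [h2] at h
      ext
      · linarith
      · exact h2
    · exfalso
      apply hε
      refine Finset.mem_image.2 ⟨(p, q), Finset.mem_product.2 ⟨hp, hq⟩, ?_⟩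
      have : p.2 - q.2 ≠ 0 := sub_ne_zero.2 h2
      simp only
      field_simp
      linarith
  obtain ⟨lo, hlo, hc, hlt⟩ := exists_lower _ hinj m hm
  obtain ⟨c, hc1, hc2⟩ := Order.exists_between_finsets
    (lo := lo.image (fun p : Pt => p.1 + ε * p.2)) ((S \ lo).image (fun p : Pt => p.1 + ε * p.2)) (by
      intro x hx y hy
      obtain ⟨x', hx', rfl⟩ := Finset.mem_image.1 hx
      obtain ⟨y', hy', rfl⟩ := Finset.mem_image.1 hy
      exact hlt x' hx' y' hy')
  have h1 : ∀ p ∈ lo, ph (ε, c) p < 0 := by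
    intro p hp
    have := hc1 _ (Finset.mem_image_of_mem _ hp)
    simp only [ph]; linarith
  have h2 : ∀ p ∈ S, p ∉ lo → 0 < ph (ε, c) p := by
    intro p hp hn
    have := hc2 _ (Finset.mem_image_of_mem _ (Finset.mem_sdiff.2 ⟨hp, hn⟩))
    simp only [ph]; linarith
  refine ⟨(ε, c), ?_, ?_⟩
  · intro p hp
    by_cases h : p ∈ lo
    · exact (h1 p h).ne
    · exact (h2 p hp h).ne'
  · rw [← hc]; congr 1
    ext p
    rw [Finset.mem_filter]
    constructor
    · rintro ⟨a, b⟩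
      by_contra h
      linarith [h2 p a h]
    · intro h; exact ⟨hlo h, h1 p h⟩

/-- one side of the line -/
def Sd (L : ℝ × ℝ) (σ : ℝ) (S : Finset Pt) : Finset Pt := S.filter (fun p => 0 < σ * ph L p)

lemma conn_retract {S : Finset Pt} {E : Finset (Sym2 Pt)} (Q : Pt → Prop) (l : Pt)
    (hc : Conn S E) (h : ∀ a c, s(a, c) ∈ E → Q a → ¬ Q c → a = l) :
    Conn (S.filter Q) (E.filter (fun e => ∀ p ∈ e, Q p)) := by
  have key : ∀ p q, Relation.ReflTransGen (fun a b => s(a, b) ∈ E) p q →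
      Relation.ReflTransGen (fun a b => s(a, b) ∈ E.filter (fun e => ∀ p ∈ e, Q p))
        (if Q p then p else l) (if Q q then q else l) := by
    intro p q hpq
    induction hpq with
    | refl => exact .refl
    | @tail b c _ hbc ih =>
      refine ih.trans ?_
      by_cases hb : Q b <;> by_cases hcq : Q c
      · simp only [hb, hcq, if_true]
        apply Relation.ReflTransGen.single
        refine Finset.mem_filter.2 ⟨hbc, ?_⟩
        intro p hp
        rcases Sym2.mem_iff.1 hp with rfl | rfl <;> assumption
      · simp only [hb, hcq, if_true, if_false]
        rw [h b c hbc hb hcq]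
      · simp only [hb, hcq, if_true, if_false]
        rw [h c b (by rw [Sym2.eq_swap]; exact hbc) hcq hb]
      · simp only [hb, hcq, if_false]
        exact .refl
  intro p hp q hq
  obtain ⟨hp, hpQ⟩ := Finset.mem_filter.1 hp
  obtain ⟨hq, hqQ⟩ := Finset.mem_filter.1 hq
  have := key p q (hc p hp q hq)
  simpa only [hpQ, hqQ, if_true] using this

/-- merged tree -/
def mg (b : Sym2 Pt) (A B : Finset (Sym2 Pt)) : Finset (Sym2 Pt) := insert b (A ∪ B)

lemma mem_mg {b e : Sym2 Pt} {A B : Finset (Sym2 Pt)} : e ∈ mg b A B ↔ e = b ∨ e ∈ A ∨ e ∈ B := by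
  simp [mg]

lemma split {L : ℝ × ℝ} {S : Finset Pt} {l r : Pt} (hb : IsB L S l r)
    (hφ : ∀ p ∈ S, ph L p ≠ 0) {T : Finset (Sym2 Pt)} (hT : IsPST S T)
    (hTb : ∀ f ∈ T, Crs L f → f = s(l, r)) :
    ∃ A B, IsPST (Sd L (-1) S) A ∧ IsPST (Sd L 1 S) B ∧ T = mg s(l, r) A B := by
  obtain ⟨hl, hr, l0, r0, hb5⟩ := hb
  have hcr : ∀ a c, s(a, c) ∈ T → ph L a < 0 → 0 < ph L c → a = l ∧ c = r := by
    intro a c h h1 h2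
    have := hTb _ h ⟨a, c, rfl, h1, h2⟩
    rcases Sym2.eq_iff.1 this with h | ⟨rfl, rfl⟩
    · exact h
    · linarith
  have hbT : s(l, r) ∈ T := by
    by_contra hn
    have : ∀ q, Relation.ReflTransGen (fun a b => s(a, b) ∈ T) l q → ph L q < 0 := by
      intro q hq
      induction hq with
      | refl => exact l0
      | @tail b c _ hbc ih =>
        by_contra hc
        push Not at hc
        have hc' := lt_of_le_of_ne hc (hφ c ((hT.1 _ hbc).2 c (by simp))).symm
        have := hcr b c hbc ih hc'
        apply hn; rw [← this.1, ← this.2]; exact hbc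
    linarith [this r (hT.2.2.2 l hl r hr)]
  set A := T.filter (fun e => ∀ p ∈ e, 0 < -1 * ph L p) with hA
  set B := T.filter (fun e => ∀ p ∈ e, 0 < 1 * ph L p) with hB
  have hTm : T = mg s(l, r) A B := by
    ext e
    rw [mem_mg]
    constructor
    · intro he
      by_cases h1 : e ∈ A
      · exact Or.inr (Or.inl h1)
      by_cases h2 : e ∈ B
      · exact Or.inr (Or.inr h2)
      left
      apply hTb e he
      induction e using Sym2.ind with
      | _ a c =>
        rw [Crs_mk]
        have a0 := hφ a ((hT.1 _ he).2 a (by simp))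
        have c0 := hφ c ((hT.1 _ he).2 c (by simp))
        rcases lt_or_gt_of_ne a0 with ha | ha <;> rcases lt_or_gt_of_ne c0 with hc | hc
        · exfalso; apply h1
          refine Finset.mem_filter.2 ⟨he, ?_⟩
          intro p hp
          rcases Sym2.mem_iff.1 hp with rfl | rfl <;> linarith
        · exact mul_neg_of_neg_of_pos ha hc
        · exact mul_neg_of_pos_of_neg ha hc
        · exfalso; apply h2
          refine Finset.mem_filter.2 ⟨he, ?_⟩
          intro p hp
          rcases Sym2.mem_iff.1 hp with rfl | rfl <;> linarith
    · rintro (rfl | h | h)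
      · exact hbT
      · exact (Finset.mem_filter.1 h).1
      · exact (Finset.mem_filter.1 h).1
  have cA : Conn (Sd L (-1) S) A := by
    refine conn_retract _ l hT.2.2.2 ?_
    intro a c h h1 h2
    push Not at h2
    exact (hcr a c h (by linarith) (lt_of_le_of_ne (by linarith)
      (hφ c ((hT.1 _ h).2 c (by simp))).symm)).1
  have cB : Conn (Sd L 1 S) B := by
    refine conn_retract _ r hT.2.2.2 ?_
    intro a c h h1 h2
    push Not at h2
    exact (hcr c a (by rw [Sym2.eq_swap]; exact h) (lt_of_le_of_ne (by linarith)
      (hφ c ((hT.1 _ h).2 c (by simp)))) (by linarith)).2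
  have vA : ∀ e ∈ A, ¬ e.IsDiag ∧ ∀ p ∈ e, p ∈ Sd L (-1) S := by
    intro e he
    obtain ⟨h1, h2⟩ := Finset.mem_filter.1 he
    exact ⟨(hT.1 e h1).1, fun p hp => Finset.mem_filter.2 ⟨(hT.1 e h1).2 p hp, h2 p hp⟩⟩
  have vB : ∀ e ∈ B, ¬ e.IsDiag ∧ ∀ p ∈ e, p ∈ Sd L 1 S := by
    intro e he
    obtain ⟨h1, h2⟩ := Finset.mem_filter.1 he
    exact ⟨(hT.1 e h1).1, fun p hp => Finset.mem_filter.2 ⟨(hT.1 e h1).2 p hp, h2 p hp⟩⟩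
  have kA := conn_card (fun e he => (vA e he).2) ⟨l, Finset.mem_filter.2 ⟨hl, by linarith⟩⟩ cA
  have kB := conn_card (fun e he => (vB e he).2) ⟨r, Finset.mem_filter.2 ⟨hr, by linarith⟩⟩ cB
  have hdAB : Disjoint A B := by
    rw [Finset.disjoint_left]
    intro e h1 h2
    induction e using Sym2.ind with
    | _ a c =>
      have := (Finset.mem_filter.1 h1).2 a (by simp)
      have := (Finset.mem_filter.1 h2).2 a (by simp)
      linarith
  have hbn : s(l, r) ∉ A ∪ B := by
    intro h
    rcases Finset.mem_union.1 h with h | h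
    · have := (Finset.mem_filter.1 h).2 r (by simp); linarith
    · have := (Finset.mem_filter.1 h).2 l (by simp); linarith
  have hcT : T.card = A.card + B.card + 1 := by
    rw [hTm, mg, Finset.card_insert_of_notMem hbn, Finset.card_union_of_disjoint hdAB]
  have hcS : (Sd L (-1) S).card + (Sd L 1 S).card = S.card := by
    have := Finset.card_filter_add_card_filter_not (s := S) (fun p => 0 < -1 * ph L p)
    rw [← this, Sd, Sd]
    congr 2
    ext p
    simp only [Finset.mem_filter]
    constructor
    · rintro ⟨h1, h2⟩; exact ⟨h1, by linarith⟩
    · rintro ⟨h1, h2⟩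
      exact ⟨h1, by have := lt_of_le_of_ne (by linarith : 0 ≤ ph L p) (hφ p h1).symm; linarith⟩
  have := hT.2.2.1
  have sA : A ⊆ T := Finset.filter_subset _ _
  have sB : B ⊆ T := Finset.filter_subset _ _
  exact ⟨A, B, ⟨vA, hT.2.1.mono sA, by omega, cA⟩, ⟨vB, hT.2.1.mono sB, by omega, cB⟩, hTm⟩

lemma Sd_card {L : ℝ × ℝ} {S : Finset Pt} (hφ : ∀ p ∈ S, ph L p ≠ 0) :
    (Sd L (-1) S).card + (Sd L 1 S).card = S.card := by
  have := Finset.card_filter_add_card_filter_not (s := S) (fun p => 0 < -1 * ph L p)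
  rw [← this, Sd, Sd]
  congr 2
  ext p
  simp only [Finset.mem_filter]
  constructor
  · rintro ⟨h1, h2⟩; exact ⟨h1, by linarith⟩
  · rintro ⟨h1, h2⟩
    exact ⟨h1, by have := lt_of_le_of_ne (by linarith : 0 ≤ ph L p) (hφ p h1).symm; linarith⟩

lemma seg_side {L : ℝ × ℝ} {σ : ℝ} {k : Sym2 Pt} (h : ∀ p ∈ k, 0 < σ * ph L p) :
    ∀ w ∈ segOf k, 0 < σ * ph L w := by
  induction k using Sym2.ind with
  | _ a c =>
    intro w hw
    obtain ⟨t, t0, t1, rfl⟩ := mem_segOf.1 hw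
    have ha := h a (by simp)
    have hc := h c (by simp)
    rw [ph_cmb]
    rcases eq_or_lt_of_le t0 with h | h
    · rw [← h]; linarith
    · have : 0 < t * (σ * ph L c) := mul_pos h hc
      have : 0 ≤ (1 - t) * (σ * ph L a) := mul_nonneg (by linarith) ha.le
      nlinarith

lemma tri_side {L : ℝ × ℝ} {σ : ℝ} {p q r : Pt} (h1 : 0 < σ * ph L p) (h2 : 0 < σ * ph L q)
    (h3 : 0 < σ * ph L r) {w : Pt} (hw : w ∈ triInt p q r) : 0 < σ * ph L w := by
  have hsub : convexHull ℝ ({p, q, r} : Set Pt) ⊆ {w | 0 < σ * ph L w} := by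
    refine convexHull_min ?_ ?_
    · intro a ha
      simp only [Set.mem_insert_iff, Set.mem_singleton_iff] at ha
      rcases ha with rfl | rfl | rfl <;> assumption
    · intro a ha b hb s t hs ht hst
      have e : σ * ph L (s • a + t • b) = s * (σ * ph L a) + t * (σ * ph L b) := by
        obtain rfl : s = 1 - t := by linarith
        simp only [ph, Prod.fst_add, Prod.snd_add, Prod.smul_fst, Prod.smul_snd, smul_eq_mul]
        ring
      change 0 < σ * ph L (s • a + t • b)
      change 0 < σ * ph L a at ha
      change 0 < σ * ph L b at hb
      rw [e]
      rcases eq_or_lt_of_le ht with h | h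
      · rw [← h] at hst ⊢
        have : s = 1 := by linarith
        rw [this]; linarith
      · have := mul_pos h hb
        have := mul_nonneg hs ha.le
        linarith
  exact hsub (interior_subset hw)

lemma side_disj {L : ℝ × ℝ} {σ : ℝ} {p q r : Pt} (h1 : 0 < σ * ph L p) (h2 : 0 < σ * ph L q)
    (h3 : 0 < σ * ph L r) {k : Sym2 Pt} (hk : ∀ p ∈ k, 0 < (-σ) * ph L p) :
    Disjoint (segOf k) (triInt p q r) := by
  rw [Set.disjoint_left]
  intro w hw hw'
  have := seg_side hk w hw
  have := tri_side h1 h2 h3 hw'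
  linarith

lemma b_disj {L : ℝ × ℝ} {S : Finset Pt} {l r : Pt} (hb : IsB L S l r) {p q t : Pt}
    (hp : p ∈ S) (hq : q ∈ S) (ht : t ∈ S) : Disjoint (segOf s(l, r)) (triInt p q t) := by
  rw [Set.disjoint_left]
  intro w hw hw'
  have h := triInt_pos hb.ne (hb.2.2.2.2 p hp) (hb.2.2.2.2 q hq) (hb.2.2.2.2 t ht) hw'
  obtain ⟨s, _, _, rfl⟩ := mem_segOf.1 hw
  rw [DD_cmb, DD_self1, DD_self2] at h
  linarith

lemma b_nocross {L : ℝ × ℝ} {S : Finset Pt} {l r : Pt} (hb : IsB L S l r) (hS : GPD S)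
    {k : Sym2 Pt} (hk : ¬ k.IsDiag ∧ ∀ p ∈ k, p ∈ S) (hne : k ≠ s(l, r)) :
    NoCrossPair k s(l, r) := by
  intro w hw
  have hw0 : DD l r w = 0 := by
    obtain ⟨s, _, _, rfl⟩ := mem_segOf.1 hw.2
    rw [DD_cmb, DD_self1, DD_self2]; ring
  have hz : ∀ p ∈ S, DD l r p = 0 → p ∈ s(l, r) := by
    intro p hp h
    exact Sym2.mem_iff.2 (hS l hb.1 r hb.2.1 p hp hb.ne h)
  induction k using Sym2.ind with
  | _ a c =>
    have haS := hk.2 a (by simp)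
    have hcS := hk.2 c (by simp)
    have hac : a ≠ c := by simpa using hk.1
    have a0 := hb.2.2.2.2 a haS
    have c0 := hb.2.2.2.2 c hcS
    obtain ⟨t, t0, t1, hwt⟩ := mem_segOf.1 hw.1
    rw [hwt, DD_cmb] at hw0
    have p1 : 0 ≤ (1 - t) * DD l r a := mul_nonneg (by linarith) a0
    have p2 : 0 ≤ t * DD l r c := mul_nonneg t0 c0
    have z1 : (1 - t) * DD l r a = 0 := by linarith
    have z2 : t * DD l r c = 0 := by linarith
    have hcase : w = a ∧ DD l r a = 0 ∨ w = c ∧ DD l r c = 0 := by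
      rcases mul_eq_zero.1 z1 with h1 | h1
      · have ht : t = 1 := by linarith
        right
        rw [ht] at z2 hwt
        exact ⟨by rw [hwt, cmb_one], by linarith⟩
      · rcases mul_eq_zero.1 z2 with h2 | h2
        · left; rw [h2] at hwt
          exact ⟨by rw [hwt, cmb_zero], h1⟩
        · exfalso
          apply hne
          have m1 := Sym2.mem_iff.1 (hz a haS h1)
          have m2 := Sym2.mem_iff.1 (hz c hcS h2)
          rcases m1 with rfl | rfl <;> rcases m2 with rfl | rfl
          · exact absurd rfl hac
          · rfl
          · exact Sym2.eq_swap
          · exact absurd rfl hac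
    rcases hcase with ⟨rfl, h⟩ | ⟨rfl, h⟩
    · exact ⟨Sym2.mem_mk_left _ _, hz _ haS h⟩
    · exact ⟨Sym2.mem_mk_right _ _, hz _ hcS h⟩

lemma mem_Sd {L : ℝ × ℝ} {σ : ℝ} {S : Finset Pt} {p : Pt} :
    p ∈ Sd L σ S ↔ p ∈ S ∧ 0 < σ * ph L p := Finset.mem_filter

lemma side_not_both {L : ℝ × ℝ} {S : Finset Pt} {e : Sym2 Pt}
    (h1 : ∀ p ∈ e, p ∈ Sd L (-1) S) (h2 : ∀ p ∈ e, p ∈ Sd L 1 S) : False := by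
  induction e using Sym2.ind with
  | _ a c =>
    have := (mem_Sd.1 (h1 a (by simp))).2
    have := (mem_Sd.1 (h2 a (by simp))).2
    linarith

lemma b_not_left {L : ℝ × ℝ} {S : Finset Pt} {l r : Pt} (hb : IsB L S l r)
    (h : ∀ p ∈ s(l, r), p ∈ Sd L (-1) S) : False := by
  have := (mem_Sd.1 (h r (by simp))).2
  linarith [hb.2.2.2.1]

lemma b_not_right {L : ℝ × ℝ} {S : Finset Pt} {l r : Pt} (hb : IsB L S l r)
    (h : ∀ p ∈ s(l, r), p ∈ Sd L 1 S) : False := by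
  have := (mem_Sd.1 (h l (by simp))).2
  linarith [hb.2.2.1]

lemma merge {L : ℝ × ℝ} {S : Finset Pt} {l r : Pt} (hb : IsB L S l r) (hS : GPD S)
    (hφ : ∀ p ∈ S, ph L p ≠ 0) {A B : Finset (Sym2 Pt)} (hA : IsPST (Sd L (-1) S) A)
    (hB : IsPST (Sd L 1 S) B) : IsPST S (mg s(l, r) A B) := by
  have vA : ∀ e ∈ A, ¬ e.IsDiag ∧ ∀ p ∈ e, p ∈ S := fun e he =>
    ⟨(hA.1 e he).1, fun p hp => (mem_Sd.1 ((hA.1 e he).2 p hp)).1⟩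
  have vB : ∀ e ∈ B, ¬ e.IsDiag ∧ ∀ p ∈ e, p ∈ S := fun e he =>
    ⟨(hB.1 e he).1, fun p hp => (mem_Sd.1 ((hB.1 e he).2 p hp)).1⟩
  have nA : s(l, r) ∉ A := fun h => b_not_left hb (hA.1 _ h).2
  have nB : s(l, r) ∉ B := fun h => b_not_right hb (hB.1 _ h).2
  have nAB : ∀ e ∈ A, ∀ f ∈ B, NoCrossPair e f := by
    intro e he f hf w hw
    exfalso
    have h1 := seg_side (fun p hp => (mem_Sd.1 ((hA.1 e he).2 p hp)).2) w hw.1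
    have h2 := seg_side (fun p hp => (mem_Sd.1 ((hB.1 f hf).2 p hp)).2) w hw.2
    linarith
  have nbA : ∀ e ∈ A, NoCrossPair e s(l, r) := fun e he =>
    b_nocross hb hS (vA e he) (by rintro rfl; exact nA he)
  have nbB : ∀ e ∈ B, NoCrossPair e s(l, r) := fun e he =>
    b_nocross hb hS (vB e he) (by rintro rfl; exact nB he)
  refine ⟨?_, ?_, ?_, ?_⟩
  · intro e he
    rcases mem_mg.1 he with rfl | h | h
    · refine ⟨by simpa using hb.ne, ?_⟩
      intro p hp
      rcases Sym2.mem_iff.1 hp with rfl | rfl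
      · exact hb.1
      · exact hb.2.1
    · exact vA e h
    · exact vB e h
  · intro e he f hf hne
    rcases mem_mg.1 he with rfl | h | h <;> rcases mem_mg.1 hf with rfl | k | k
    · exact absurd rfl hne
    · exact (nbA f k).symm
    · exact (nbB f k).symm
    · exact nbA e h
    · exact hA.2.1 e h f k hne
    · exact nAB e h f k
    · exact nbB e h
    · exact (nAB f k e h).symm
    · exact hB.2.1 e h f k hne
  · have hd : Disjoint A B := by
      rw [Finset.disjoint_left]
      intro e h1 h2
      exact side_not_both (hA.1 e h1).2 (hB.1 e h2).2
    have hn : s(l, r) ∉ A ∪ B := by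
      intro h
      rcases Finset.mem_union.1 h with h | h
      · exact nA h
      · exact nB h
    rw [mg, Finset.card_insert_of_notMem hn, Finset.card_union_of_disjoint hd, ← Sd_card hφ]
    have := hA.2.2.1
    have := hB.2.2.1
    omega
  · have hlr : Relation.ReflTransGen (fun a b => s(a, b) ∈ mg s(l, r) A B) r l := by
      apply Relation.ReflTransGen.single
      rw [Sym2.eq_swap (a := r)]
      exact mem_mg.2 (Or.inl rfl)
    have sA : A ⊆ mg s(l, r) A B := fun e he => mem_mg.2 (Or.inr (Or.inl he))
    have sB : B ⊆ mg s(l, r) A B := fun e he => mem_mg.2 (Or.inr (Or.inr he))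
    have hall : ∀ p ∈ S, Relation.ReflTransGen (fun a b => s(a, b) ∈ mg s(l, r) A B) p l := by
      intro p hp
      rcases lt_or_gt_of_ne (hφ p hp) with h | h
      · exact rtg_mono sA (hA.2.2.2 p (mem_Sd.2 ⟨hp, by linarith⟩) l
          (mem_Sd.2 ⟨hb.1, by linarith [hb.2.2.1]⟩))
      · exact (rtg_mono sB (hB.2.2.2 p (mem_Sd.2 ⟨hp, by linarith⟩) r
          (mem_Sd.2 ⟨hb.2.1, by linarith [hb.2.2.2.1]⟩))).trans hlr
    exact fun p hp q hq => (hall p hp).trans (rtg_symm (hall q hq))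

lemma merge_step {L : ℝ × ℝ} {S : Finset Pt} {l r : Pt} (hb : IsB L S l r) (hS : GPD S)
    (hφ : ∀ p ∈ S, ph L p ≠ 0) {A A' B B' : Finset (Sym2 Pt)}
    (hA : SimEmptyTriRot (Sd L (-1) S) A A') (hB : SimEmptyTriRot (Sd L 1 S) B B') :
    SimEmptyTriRot S (mg s(l, r) A B) (mg s(l, r) A' B') := by
  obtain ⟨A1, A2, f, fb, hf⟩ := hA
  obtain ⟨B1, B2, g, gb, hg⟩ := hB
  have hAB : ∀ e, (e ∈ A ∨ e ∈ A') → (e ∈ B ∨ e ∈ B') → False := by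
    intro e h1 h2
    refine side_not_both (e := e) (L := L) (S := S) ?_ ?_
    · rcases h1 with h | h
      · exact (A1.1 e h).2
      · exact (A2.1 e h).2
    · rcases h2 with h | h
      · exact (B1.1 e h).2
      · exact (B2.1 e h).2
  have hbA : ∀ e, (e ∈ A ∨ e ∈ A') → e ≠ s(l, r) := by
    rintro e h rfl
    rcases h with h | h
    · exact b_not_left hb (A1.1 _ h).2
    · exact b_not_left hb (A2.1 _ h).2
  have hbB : ∀ e, (e ∈ B ∨ e ∈ B') → e ≠ s(l, r) := by
    rintro e h rfl
    rcases h with h | h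
    · exact b_not_right hb (B1.1 _ h).2
    · exact b_not_right hb (B2.1 _ h).2
  have hd1 : ∀ e, e ∈ mg s(l, r) A B \ mg s(l, r) A' B' ↔ e ∈ A \ A' ∨ e ∈ B \ B' := by
    intro e
    have a := hAB e
    have b := hbA e
    have c := hbB e
    simp only [Finset.mem_sdiff, mem_mg]
    tauto
  have hd2 : ∀ e, e ∈ mg s(l, r) A' B' \ mg s(l, r) A B ↔ e ∈ A' \ A ∨ e ∈ B' \ B := by
    intro e
    have a := hAB e
    have b := hbA e
    have c := hbB e
    simp only [Finset.mem_sdiff, mem_mg]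
    tauto
  have hfA : ∀ e ∈ A \ A', f e ∈ A' \ A := fun e he => Finset.mem_coe.1 (fb.mapsTo (Finset.mem_coe.2 he))
  have hgB : ∀ e ∈ B \ B', g e ∈ B' \ B := fun e he => Finset.mem_coe.1 (gb.mapsTo (Finset.mem_coe.2 he))
  set π : Sym2 Pt → Sym2 Pt := fun e => if e ∈ A then f e else g e with hπ
  have πA : ∀ e ∈ A \ A', π e = f e := by
    intro e he; simp only [hπ]; rw [if_pos (Finset.mem_sdiff.1 he).1]
  have πB : ∀ e ∈ B \ B', π e = g e := by
    intro e he; simp only [hπ]; rw [if_neg]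
    intro h; exact hAB e (Or.inl h) (Or.inl (Finset.mem_sdiff.1 he).1)
  have hcross : ∀ e ∈ A \ A', ∀ e' ∈ B \ B', f e ≠ g e' := by
    intro e he e' he' h
    refine hAB (f e) (Or.inr (Finset.mem_sdiff.1 (hfA e he)).1) (Or.inr ?_)
    rw [h]; exact (Finset.mem_sdiff.1 (hgB e' he')).1
  refine ⟨merge hb hS hφ A1 B1, merge hb hS hφ A2 B2, π, ⟨?_, ?_, ?_⟩, ?_⟩
  · intro e he
    rw [Finset.mem_coe, hd1] at he
    rw [Finset.mem_coe, hd2]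
    rcases he with he | he
    · rw [πA e he]; exact Or.inl (hfA e he)
    · rw [πB e he]; exact Or.inr (hgB e he)
  · intro e he e' he' h
    rw [Finset.mem_coe, hd1] at he he'
    rcases he with he | he <;> rcases he' with he' | he'
    · rw [πA e he, πA e' he'] at h
      exact fb.injOn (Finset.mem_coe.2 he) (Finset.mem_coe.2 he') h
    · rw [πA e he, πB e' he'] at h
      exact absurd h (hcross e he e' he')
    · rw [πB e he, πA e' he'] at h
      exact absurd h.symm (hcross e' he' e he)
    · rw [πB e he, πB e' he'] at h
      exact gb.injOn (Finset.mem_coe.2 he) (Finset.mem_coe.2 he') h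
  · intro e he
    rw [Finset.mem_coe, hd2] at he
    rcases he with he | he
    · obtain ⟨e', he', h⟩ := fb.surjOn (Finset.mem_coe.2 he)
      rw [Finset.mem_coe] at he'
      exact ⟨e', Finset.mem_coe.2 ((hd1 e').2 (Or.inl he')), by rw [πA e' he', h]⟩
    · obtain ⟨e', he', h⟩ := gb.surjOn (Finset.mem_coe.2 he)
      rw [Finset.mem_coe] at he'
      exact ⟨e', Finset.mem_coe.2 ((hd1 e').2 (Or.inr he')), by rw [πB e' he', h]⟩
  · intro e he
    rw [hd1] at he
    rcases he with he | he
    · rw [πA e he]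
      obtain ⟨p, q, t, e1, e2, e3⟩ := hf e he
      refine ⟨p, q, t, e1, e2, ?_⟩
      have m1 := (A1.1 e (Finset.mem_sdiff.1 he).1).2
      have m2 := (A2.1 _ (Finset.mem_sdiff.1 (hfA e he)).1).2
      rw [e2] at m2
      rw [e1] at m1
      have hp := mem_Sd.1 (m1 p (by simp))
      have hq := mem_Sd.1 (m1 q (by simp))
      have ht := mem_Sd.1 (m2 t (by simp))
      intro k hk
      have hk' : k = s(l, r) ∨ k ∈ A ∪ A' ∨ (k ∈ B ∨ k ∈ B') := by
        simp only [Finset.mem_union, mem_mg] at hk ⊢; tauto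
      rcases hk' with rfl | hk' | hk'
      · exact b_disj hb hp.1 hq.1 ht.1
      · exact e3 k hk'
      · refine side_disj hp.2 hq.2 ht.2 ?_
        intro u hu
        rw [neg_neg]
        rcases hk' with h | h
        · exact (mem_Sd.1 ((B1.1 k h).2 u hu)).2
        · exact (mem_Sd.1 ((B2.1 k h).2 u hu)).2
    · rw [πB e he]
      obtain ⟨p, q, t, e1, e2, e3⟩ := hg e he
      refine ⟨p, q, t, e1, e2, ?_⟩
      have m1 := (B1.1 e (Finset.mem_sdiff.1 he).1).2
      have m2 := (B2.1 _ (Finset.mem_sdiff.1 (hgB e he)).1).2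
      rw [e2] at m2
      rw [e1] at m1
      have hp := mem_Sd.1 (m1 p (by simp))
      have hq := mem_Sd.1 (m1 q (by simp))
      have ht := mem_Sd.1 (m2 t (by simp))
      intro k hk
      have hk' : k = s(l, r) ∨ k ∈ B ∪ B' ∨ (k ∈ A ∨ k ∈ A') := by
        simp only [Finset.mem_union, mem_mg] at hk ⊢; tauto
      rcases hk' with rfl | hk' | hk'
      · exact b_disj hb hp.1 hq.1 ht.1
      · exact e3 k hk'
      · refine side_disj hp.2 hq.2 ht.2 ?_
        intro u hu
        rcases hk' with h | h
        · exact (mem_Sd.1 ((A1.1 k h).2 u hu)).2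
        · exact (mem_Sd.1 ((A2.1 k h).2 u hu)).2

lemma GPD.mono {S S' : Finset Pt} (h : GPD S) (hs : S' ⊆ S) : GPD S' :=
  fun p hp q hq r hr => h p (hs hp) q (hs hq) r (hs hr)

lemma main_rec : ∀ n : ℕ, ∀ S : Finset Pt, S.card = n → GPD S →
    ∀ E E' : Finset (Sym2 Pt), IsPST S E → IsPST S E' →
      ReachesIn (SimEmptyTriRot S) (8 * n - 8) E E' := by
  intro n
  induction n using Nat.strong_induction_on with
  | _ n ih =>
    intro S hSn hS E E' hE hE'
    have c1 := hE.2.2.1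
    have c2 := hE'.2.2.1
    by_cases hn : n ≤ 1
    · have z1 : E = ∅ := Finset.card_eq_zero.1 (by omega)
      have z2 : E' = ∅ := Finset.card_eq_zero.1 (by omega)
      rw [z1, z2]; exact ReachesIn.refl' _ _
    · obtain ⟨L, hφ, hL⟩ := exists_line S (n / 2) (by omega)
      have hSL : (Sd L (-1) S).card = n / 2 := by
        rw [← hL, Sd]; congr 1
        ext p; simp
      have hsum := Sd_card hφ
      have h1 : ∃ p ∈ S, ph L p < 0 := by
        have : 0 < (S.filter (fun p => ph L p < 0)).card := by omega
        obtain ⟨p, hp⟩ := Finset.card_pos.1 this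
        exact ⟨p, Finset.mem_filter.1 hp⟩
      have h2 : ∃ p ∈ S, 0 < ph L p := by
        have : 0 < (Sd L 1 S).card := by omega
        obtain ⟨p, hp⟩ := Finset.card_pos.1 this
        have := mem_Sd.1 hp
        exact ⟨p, this.1, by linarith [this.2]⟩
      obtain ⟨l, r, hb⟩ := exists_B hφ h1 h2
      obtain ⟨T, hT, hTb, hTr⟩ := sweep_main hb hS hφ hE
      obtain ⟨T', hT', hTb', hTr'⟩ := sweep_main hb hS hφ hE'
      obtain ⟨A, B, hA, hB, rfl⟩ := split hb hφ hT hTb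
      obtain ⟨A', B', hA', hB', rfl⟩ := split hb hφ hT' hTb'
      have sA : Sd L (-1) S ⊆ S := Finset.filter_subset _ _
      have sB : Sd L 1 S ⊆ S := Finset.filter_subset _ _
      have rA := (ih (n / 2) (by omega) _ hSL (hS.mono sA) A A' hA hA').mono'
        (m' := 8 * (n - n / 2) - 8) (by omega)
      have rB := ih (n - n / 2) (by omega) _ (by omega) (hS.mono sB) B B' hB hB'
      obtain ⟨f, f0, f1, hf⟩ := rA.exact' hA
      obtain ⟨g, g0, g1, hg⟩ := rB.exact' hB
      have mid : ReachesIn (SimEmptyTriRot S) (8 * (n - n / 2) - 8) (mg s(l, r) A B)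
          (mg s(l, r) A' B') :=
        ⟨_, le_rfl, fun i => mg s(l, r) (f i) (g i), by simp only [f0, g0], by simp only [f1, g1],
          fun i hi => merge_step hb hS hφ (hf i hi) (hg i hi)⟩
      have back := hTr'.symm' (fun _ _ h => h.symm)
      exact ((hTr.trans' mid).trans' back).mono' (by omega)

/-- any two noncrossing spanning trees on `n` points in general position are
connected by fewer than `8n` simultaneous empty-triangle rotations. -/
theorem stmt_4 :
    ∀ S : Finset Pt, GenPos S →
      ∀ E E' : Finset (Sym2 Pt), IsPST S E → IsPST S E' →
        ∃ m : ℕ, m < 8 * S.card ∧ ReachesIn (SimEmptyTriRot S) m E E' := by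
  intro S hS E E' hE hE'
  have := hE.2.2.1
  exact ⟨8 * S.card - 8, by omega, main_rec _ S rfl hS.gpd E E' hE hE'⟩
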